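/- In the setting below, for every M > 0 there exists a constant C₀ > 0, depending only on p, c₁, c₂, C_U, u₋, u₊, f and M (and not on T), such that whenever ‖φ(0,·)‖_{L²} + ‖∂ₓφ(0,·)‖_{L²} + sup_{x∈ℝ}|φ(0,x)| ≤ M, then, setting N := sup_{(t,x)∈[0,T]×ℝ} (1+(∂ₓφ(t,x))²)^{1/2}, for all t ∈ [0,T]: ∫_ℝ (1+(∂ₓφ(t,x))²)^{(p−1)/2}·(∂ₓφ(t,x))² dx + ∫₀^t ∫_ℝ (1+(∂ₓφ(τ,x))²)^{p−1}·(∂ₓ²φ(τ,x))² dx dτ ≤ C₀ · N^{1−p}. -/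

import Mathlib

open MeasureTheory Filter Set intervalIntegral

/-- `L²` norm in the space variable. -/
noncomputable def L2norm (g : ℝ → ℝ) : ℝ := (∫ x : ℝ, (g x) ^ 2) ^ ((1 : ℝ) / 2)

/-! ### Calculus helpers -/

/-- mean value form of increments along a segment -/
lemma mvt_exists (g g1 : ℝ → ℝ) (hg : ∀ z, HasDerivAt g (g1 z) z) (a v : ℝ) :
    ∃ θ ∈ Icc (0:ℝ) 1, g (a + v) - g a = g1 (a + θ * v) * v := by
  have hd : ∀ s : ℝ, HasDerivAt (fun s => g (a + s * v)) (g1 (a + s * v) * v) s := by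
    intro s
    have h1 : HasDerivAt (fun s : ℝ => a + s * v) v s := by
      simpa using ((hasDerivAt_id s).mul_const v).const_add a
    exact (hg (a + s * v)).comp s h1
  obtain ⟨c, hc, h⟩ := exists_hasDerivAt_eq_slope (fun s => g (a + s * v))
    (fun s => g1 (a + s * v) * v) (a := 0) (b := 1) one_pos
    (fun s _ => (hd s).continuousAt.continuousWithinAt) (fun s _ => hd s)
  refine ⟨c, ⟨hc.1.le, hc.2.le⟩, ?_⟩
  simp at h
  linarith

lemma taylor2_lower (F g g1 : ℝ → ℝ) (hF : ∀ z, HasDerivAt F (g z) z)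
    (hg : ∀ z, HasDerivAt g (g1 z) z) (a v m : ℝ)
    (hm : ∀ θ ∈ Icc (0:ℝ) 1, m ≤ g1 (a + θ * v)) :
    m / 2 * v ^ 2 ≤ F (a + v) - F a - g a * v := by
  have hk : ∀ s : ℝ, HasDerivAt (fun s => F (a + s * v) - s * (g a * v) - s ^ 2 * (m / 2 * v ^ 2))
      (g (a + s * v) * v - g a * v - s * (m * v ^ 2)) s := by
    intro s
    have h1 : HasDerivAt (fun s : ℝ => a + s * v) v s := by
      simpa using ((hasDerivAt_id s).mul_const v).const_add a
    have h2 := (hF (a + s * v)).comp s h1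
    have h3 := (hasDerivAt_id s).mul_const (g a * v)
    have h4 := ((hasDerivAt_id s).pow 2).mul_const (m / 2 * v ^ 2)
    refine ((h2.sub h3).sub h4).congr_deriv ?_
    simp; ring
  have hmono : MonotoneOn (fun s => F (a + s * v) - s * (g a * v) - s ^ 2 * (m / 2 * v ^ 2))
      (Icc (0:ℝ) 1) := by
    apply monotoneOn_of_deriv_nonneg (convex_Icc 0 1)
    · exact fun s _ => (hk s).continuousAt.continuousWithinAt
    · exact fun s _ => (hk s).differentiableAt.differentiableWithinAt
    · intro s hs
      rw [interior_Icc] at hs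
      rw [(hk s).deriv]
      obtain ⟨θ, hθ, h⟩ := mvt_exists g g1 hg a (s * v)
      have h5 := hm (θ * s) ⟨mul_nonneg hθ.1 hs.1.le, by nlinarith [hθ.1, hθ.2, hs.1, hs.2]⟩
      have h6 : g (a + s * v) * v - g a * v = g1 (a + θ * s * v) * (s * v ^ 2) := by
        have : g (a + s * v) * v - g a * v = (g (a + s * v) - g a) * v := by ring
        rw [this, h]; ring_nf
      rw [h6]
      have : 0 ≤ s * v ^ 2 := mul_nonneg hs.1.le (sq_nonneg v)
      nlinarith
  have := hmono (left_mem_Icc.2 zero_le_one) (right_mem_Icc.2 zero_le_one) zero_le_one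
  simp at this
  linarith

lemma taylor2_upper (F g g1 : ℝ → ℝ) (hF : ∀ z, HasDerivAt F (g z) z)
    (hg : ∀ z, HasDerivAt g (g1 z) z) (a v m : ℝ)
    (hm : ∀ θ ∈ Icc (0:ℝ) 1, g1 (a + θ * v) ≤ m) :
    F (a + v) - F a - g a * v ≤ m / 2 * v ^ 2 := by
  have := taylor2_lower (fun z => - F z) (fun z => - g z) (fun z => - g1 z)
    (fun z => (hF z).fun_neg) (fun z => (hg z).fun_neg) a v (-m) (fun θ hθ => neg_le_neg (hm θ hθ))
  nlinarith

lemma exists_antideriv (g : ℝ → ℝ) (hg : Continuous g) :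
    ∃ F : ℝ → ℝ, ∀ z, HasDerivAt F (g z) z :=
  ⟨fun z => ∫ x in (0:ℝ)..z, g x, fun z => hg.integral_hasStrictDerivAt 0 z |>.hasDerivAt⟩

/-! ### Square integrable continuous functions -/

/-- continuous and square integrable -/
def CL2 (a : ℝ → ℝ) : Prop := Continuous a ∧ Integrable (fun x => a x ^ 2)

lemma CL2.mul {a b : ℝ → ℝ} (ha : CL2 a) (hb : CL2 b) : Integrable (fun x => a x * b x) := by
  have h1 := (memLp_two_iff_integrable_sq ha.1.aestronglyMeasurable).2 ha.2
  have h2 := (memLp_two_iff_integrable_sq hb.1.aestronglyMeasurable).2 hb.2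
  exact h1.integrable_mul h2

lemma CL2.add {a b : ℝ → ℝ} (ha : CL2 a) (hb : CL2 b) : CL2 (fun x => a x + b x) := by
  refine ⟨ha.1.add hb.1, ?_⟩
  have := (ha.2.add hb.2).add ((ha.mul hb).const_mul 2)
  refine this.congr (Eventually.of_forall fun x => ?_)
  simp; ring

lemma CL2.dom {a b : ℝ → ℝ} (ha : CL2 a) (hb : Continuous b) (C : ℝ)
    (h : ∀ x, |b x| ≤ C * |a x|) : CL2 b := by
  refine ⟨hb, ?_⟩
  refine (ha.2.const_mul (C ^ 2)).mono' (hb.pow 2).aestronglyMeasurable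
    (Eventually.of_forall fun x => ?_)
  rw [Real.norm_eq_abs, abs_pow, ← sq_abs (a x), ← mul_pow]
  exact pow_le_pow_left₀ (abs_nonneg _) (h x) 2

lemma CL2.abs {a : ℝ → ℝ} (ha : CL2 a) : CL2 (fun x => |a x|) :=
  ha.dom ha.1.abs 1 (by simp)

lemma CL2.neg {a : ℝ → ℝ} (ha : CL2 a) : CL2 (fun x => - a x) :=
  ha.dom ha.1.neg 1 (by simp)

lemma CL2.bdd_mul {a c : ℝ → ℝ} (ha : CL2 a) (hc : Continuous c) (K : ℝ) (hK : ∀ x, |c x| ≤ K) :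
    CL2 (fun x => c x * a x) :=
  ha.dom (hc.mul ha.1) K (fun x => by
    rw [abs_mul]; exact mul_le_mul_of_nonneg_right (hK x) (abs_nonneg _))

lemma CL2.parts {a b a' b' : ℝ → ℝ} (ha : CL2 a) (hb : CL2 b) (ha' : CL2 a') (hb' : CL2 b')
    (h1 : ∀ x, HasDerivAt a (a' x) x) (h2 : ∀ x, HasDerivAt b (b' x) x) :
    ∫ x, a x * b' x = - ∫ x, a' x * b x :=
  integral_mul_deriv_eq_deriv_mul_of_integrable (fun x _ => h1 x) (fun x _ => h2 x)
    (ha.mul hb') (ha'.mul hb) (ha.mul hb)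

lemma cauchy_schwarz {a b : ℝ → ℝ} (ha : CL2 a) (hb : CL2 b) (A B : ℝ) (hA : 0 ≤ A) (hB : 0 ≤ B)
    (h1 : ∫ x, a x ^ 2 ≤ A ^ 2) (h2 : ∫ x, b x ^ 2 ≤ B ^ 2) :
    ∫ x, |a x * b x| ≤ A * B := by
  have h := integral_mul_le_Lp_mul_Lq_of_nonneg (μ := volume) Real.HolderConjugate.two_two
    (f := fun x => |a x|) (g := fun x => |b x|) (Eventually.of_forall fun x => abs_nonneg _)
    (Eventually.of_forall fun x => abs_nonneg _)
    (by simpa using (memLp_two_iff_integrable_sq ha.abs.1.aestronglyMeasurable).2 ha.abs.2)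
    (by simpa using (memLp_two_iff_integrable_sq hb.abs.1.aestronglyMeasurable).2 hb.abs.2)
  simp only [Real.rpow_two, sq_abs, ← Real.sqrt_eq_rpow] at h
  simp only [abs_mul]
  refine h.trans (mul_le_mul (Real.sqrt_le_iff.2 ⟨hA, h1⟩) (Real.sqrt_le_iff.2 ⟨hB, h2⟩)
    (Real.sqrt_nonneg _) hA)

/-! ### Fubini in time -/

lemma joint_integrable (g : ℝ → ℝ → ℝ) (hg : Continuous (fun q : ℝ × ℝ => g q.1 q.2)) (T B : ℝ)
    (hi : ∀ t ∈ Icc 0 T, Integrable (g t)) (hB : ∀ t ∈ Icc 0 T, ∫ x, |g t x| ≤ B)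
    (t : ℝ) (ht : t ∈ Icc 0 T) :
    Integrable (Function.uncurry g) ((volume.restrict (Ioc 0 t)).prod volume) := by
  have hm : AEStronglyMeasurable (Function.uncurry g) ((volume.restrict (Ioc 0 t)).prod volume) :=
    Continuous.aestronglyMeasurable hg
  rw [integrable_prod_iff hm]
  constructor
  · refine (ae_restrict_iff' measurableSet_Ioc).2 (Eventually.of_forall fun s hs => ?_)
    exact hi s ⟨hs.1.le, hs.2.trans ht.2⟩
  · refine Integrable.mono' (g := fun _ => B) (integrable_const B)
      (AEStronglyMeasurable.integral_prod_right' (f := fun q => ‖Function.uncurry g q‖) hm.norm) ?_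
    refine (ae_restrict_iff' measurableSet_Ioc).2 (Eventually.of_forall fun s hs => ?_)
    rw [Real.norm_of_nonneg (integral_nonneg fun x => norm_nonneg _)]
    exact hB s ⟨hs.1.le, hs.2.trans ht.2⟩

lemma time_integrable (g : ℝ → ℝ → ℝ) (hg : Continuous (fun q : ℝ × ℝ => g q.1 q.2)) (T B : ℝ)
    (hi : ∀ t ∈ Icc 0 T, Integrable (g t)) (hB : ∀ t ∈ Icc 0 T, ∫ x, |g t x| ≤ B)
    (t : ℝ) (ht : t ∈ Icc 0 T) :
    IntervalIntegrable (fun s => ∫ x, g s x) volume 0 t := by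
  rw [intervalIntegrable_iff_integrableOn_Ioc_of_le ht.1]
  exact (joint_integrable g hg T B hi hB t ht).integral_prod_left

lemma time_ftc (g gt : ℝ → ℝ → ℝ) (hg : Continuous (fun q : ℝ × ℝ => gt q.1 q.2)) (T B : ℝ)
    (hd : ∀ t x, HasDerivAt (fun s => g s x) (gt t x) t)
    (hgi : ∀ t ∈ Icc 0 T, Integrable (g t))
    (hi : ∀ t ∈ Icc 0 T, Integrable (gt t)) (hB : ∀ t ∈ Icc 0 T, ∫ x, |gt t x| ≤ B)
    (t : ℝ) (ht : t ∈ Icc 0 T) :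
    (∫ x, g t x) - ∫ x, g 0 x = ∫ s in (0:ℝ)..t, ∫ x, gt s x := by
  have h := integral_integral_swap (joint_integrable gt hg T B hi hB t ht)
  rw [integral_of_le ht.1, h, ← integral_sub (hgi t ht) (hgi 0 ⟨le_rfl, ht.1.trans ht.2⟩)]
  refine integral_congr_ae (Eventually.of_forall fun x => ?_)
  simp only
  rw [← integral_of_le ht.1]
  symm
  refine integral_eq_sub_of_hasDerivAt (fun s _ => hd s x) ?_
  exact (hg.comp (Continuous.prodMk continuous_id continuous_const)).intervalIntegrable 0 t

/-- the time weight -/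
lemma weight_int (t : ℝ) (ht : 0 ≤ t) :
    IntervalIntegrable (fun s : ℝ => (1 + s) ^ (-(9:ℝ)/8)) volume 0 t ∧
    ∫ s in (0:ℝ)..t, (1 + s) ^ (-(9:ℝ)/8) ≤ 8 := by
  have hc : ContinuousOn (fun s : ℝ => (1 + s) ^ (-(9:ℝ)/8)) (uIcc 0 t) := by
    intro s hs
    rw [uIcc_of_le ht] at hs
    have : (1 + s) ≠ 0 := by linarith [hs.1]
    exact ((continuousAt_const.add continuousAt_id).rpow_const (Or.inl this)).continuousWithinAt
  refine ⟨hc.intervalIntegrable, ?_⟩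
  have hd : ∀ s ∈ uIcc 0 t, HasDerivAt (fun s : ℝ => -8 * (1 + s) ^ (-(1:ℝ)/8))
      ((1 + s) ^ (-(9:ℝ)/8)) s := by
    intro s hs
    rw [uIcc_of_le ht] at hs
    have h0 : (1 + s) ≠ 0 := by linarith [hs.1]
    have h1 : HasDerivAt (fun s : ℝ => 1 + s) 1 s := (hasDerivAt_id s).const_add 1
    have h2 := (h1.rpow_const (p := -(1:ℝ)/8) (Or.inl h0)).const_mul (-8)
    refine h2.congr_deriv ?_
    norm_num
    ring
  rw [integral_eq_sub_of_hasDerivAt hd hc.intervalIntegrable]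
  have : 0 ≤ (1 + t) ^ (-(1:ℝ)/8) := Real.rpow_nonneg (by linarith) _
  simp
  linarith


/-! ### Partial derivatives of jointly smooth functions -/

/-- jointly smooth -/
def Sm (g : ℝ → ℝ → ℝ) : Prop := ContDiff ℝ (⊤ : ℕ∞) (fun q : ℝ × ℝ => g q.1 q.2)

/-- space derivative -/
noncomputable def dx (g : ℝ → ℝ → ℝ) : ℝ → ℝ → ℝ := fun t => deriv (g t)

/-- time derivative -/
noncomputable def dt (g : ℝ → ℝ → ℝ) : ℝ → ℝ → ℝ := fun t x => deriv (fun s => g s x) t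

lemma Sm.hasDerivAt_x' {g : ℝ → ℝ → ℝ} (hg : Sm g) (t x : ℝ) :
    HasDerivAt (g t) (fderiv ℝ (fun q : ℝ × ℝ => g q.1 q.2) (t, x) (0, 1)) x := by
  have h1 : HasFDerivAt (fun q : ℝ × ℝ => g q.1 q.2) _ (t, x) :=
    (ContDiff.differentiable hg (by simp) (t, x)).hasFDerivAt
  have h2 : HasDerivAt (fun y : ℝ => (t, y)) ((0:ℝ), (1:ℝ)) x :=
    (hasDerivAt_const x t).prodMk (hasDerivAt_id x)
  exact HasFDerivAt.comp_hasDerivAt x h1 h2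

lemma Sm.hasDerivAt_t' {g : ℝ → ℝ → ℝ} (hg : Sm g) (t x : ℝ) :
    HasDerivAt (fun s => g s x) (fderiv ℝ (fun q : ℝ × ℝ => g q.1 q.2) (t, x) (1, 0)) t := by
  have h1 : HasFDerivAt (fun q : ℝ × ℝ => g q.1 q.2) _ (t, x) :=
    (ContDiff.differentiable hg (by simp) (t, x)).hasFDerivAt
  have h2 : HasDerivAt (fun s : ℝ => (s, x)) ((1:ℝ), (0:ℝ)) t :=
    (hasDerivAt_id t).prodMk (hasDerivAt_const t x)
  exact HasFDerivAt.comp_hasDerivAt (f := fun s : ℝ => (s, x)) t h1 h2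

lemma Sm.dx_eq {g : ℝ → ℝ → ℝ} (hg : Sm g) :
    dx g = fun t x => fderiv ℝ (fun q : ℝ × ℝ => g q.1 q.2) (t, x) (0, 1) := by
  funext t x; exact (hg.hasDerivAt_x' t x).deriv

lemma Sm.dt_eq {g : ℝ → ℝ → ℝ} (hg : Sm g) :
    dt g = fun t x => fderiv ℝ (fun q : ℝ × ℝ => g q.1 q.2) (t, x) (1, 0) := by
  funext t x; exact (hg.hasDerivAt_t' t x).deriv

lemma Sm.hx {g : ℝ → ℝ → ℝ} (hg : Sm g) (t x : ℝ) : HasDerivAt (g t) (dx g t x) x := by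
  rw [hg.dx_eq]; exact hg.hasDerivAt_x' t x

lemma Sm.ht {g : ℝ → ℝ → ℝ} (hg : Sm g) (t x : ℝ) : HasDerivAt (fun s => g s x) (dt g t x) t := by
  rw [hg.dt_eq]; exact hg.hasDerivAt_t' t x

lemma Sm.dx {g : ℝ → ℝ → ℝ} (hg : Sm g) : Sm (dx g) := by
  rw [hg.dx_eq]
  exact ((ContDiff.fderiv_right hg (m := (⊤ : ℕ∞)) (by simp)).clm_apply contDiff_const)

lemma Sm.dt {g : ℝ → ℝ → ℝ} (hg : Sm g) : Sm (dt g) := by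
  rw [hg.dt_eq]
  exact ((ContDiff.fderiv_right hg (m := (⊤ : ℕ∞)) (by simp)).clm_apply contDiff_const)

lemma Sm.cont {g : ℝ → ℝ → ℝ} (hg : Sm g) : Continuous (fun q : ℝ × ℝ => g q.1 q.2) :=
  ContDiff.continuous hg

lemma Sm.cont_x {g : ℝ → ℝ → ℝ} (hg : Sm g) (t : ℝ) : Continuous (g t) :=
  hg.cont.comp (Continuous.prodMk continuous_const continuous_id)

lemma Sm.comm {g : ℝ → ℝ → ℝ} (hg : Sm g) : _root_.dx (_root_.dt g) = _root_.dt (_root_.dx g) := by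
  funext t x
  have hs : IsSymmSndFDerivAt ℝ (fun q : ℝ × ℝ => g q.1 q.2) (t, x) :=
    (ContDiff.contDiffAt hg).isSymmSndFDerivAt (by
      rw [minSmoothness_of_isRCLikeNormedField]; exact WithTop.coe_le_coe.2 (le_top : (2:ℕ∞) ≤ ⊤))
  have hd : HasFDerivAt (fderiv ℝ (fun q : ℝ × ℝ => g q.1 q.2)) _ (t, x) :=
    ((ContDiff.fderiv_right hg (m := (⊤ : ℕ∞)) (by simp)).differentiable (by simp) (t, x)).hasFDerivAt
  have h1 : HasDerivAt (_root_.dt g t)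
      (fderiv ℝ (fderiv ℝ (fun q : ℝ × ℝ => g q.1 q.2)) (t, x) (0, 1) (1, 0)) x := by
    rw [hg.dt_eq]
    have h2 : HasDerivAt (fun y : ℝ => (t, y)) ((0:ℝ), (1:ℝ)) x :=
      (hasDerivAt_const x t).prodMk (hasDerivAt_id x)
    have h3 := HasFDerivAt.comp_hasDerivAt (f := fun y : ℝ => (t, y)) x hd h2
    simpa using h3.clm_apply (hasDerivAt_const x ((1:ℝ), (0:ℝ)))
  have h1' : HasDerivAt (fun s => _root_.dx g s x)
      (fderiv ℝ (fderiv ℝ (fun q : ℝ × ℝ => g q.1 q.2)) (t, x) (1, 0) (0, 1)) t := by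
    rw [hg.dx_eq]
    have h2 : HasDerivAt (fun s : ℝ => (s, x)) ((1:ℝ), (0:ℝ)) t :=
      (hasDerivAt_id t).prodMk (hasDerivAt_const t x)
    have h3 := HasFDerivAt.comp_hasDerivAt (f := fun s : ℝ => (s, x)) t hd h2
    simpa using h3.clm_apply (hasDerivAt_const t ((0:ℝ), (1:ℝ)))
  rw [(hg.dt.hx t x).unique h1, (hg.dx.ht t x).unique h1']
  exact hs _ _

/-! ### Maximum principle -/

lemma second_deriv_nonpos_of_max (g g1 g2 : ℝ → ℝ) (h1 : ∀ x, HasDerivAt g (g1 x) x)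
    (h2 : ∀ x, HasDerivAt g1 (g2 x) x) (x0 : ℝ) (hmax : ∀ x, g x ≤ g x0) :
    g1 x0 = 0 ∧ g2 x0 ≤ 0 := by
  have hlm : IsLocalMax g x0 := Eventually.of_forall hmax
  have e1 : g1 x0 = 0 := hlm.hasDerivAt_eq_zero (h1 x0)
  refine ⟨e1, ?_⟩
  by_contra hpos
  push Not at hpos
  have d1 : deriv g = g1 := funext fun x => (h1 x).deriv
  have hmin : IsLocalMin g x0 := by
    refine isLocalMin_of_deriv_deriv_pos ?_ ?_ (h1 x0).continuousAt
    · rw [d1, (h2 x0).deriv]; exact hpos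
    · rw [d1, e1]
  have hc : g =ᶠ[nhds x0] fun _ => g x0 := by
    filter_upwards [hmin] with x hx using le_antisymm (hmax x) hx
  have h3 : deriv g =ᶠ[nhds x0] deriv (fun _ => g x0) := hc.deriv
  have h4 := h3.deriv_eq
  rw [d1, (h2 x0).deriv] at h4
  simp at h4
  linarith

lemma max_principle (W : ℝ → ℝ → ℝ) (hW : Sm W) (T B K A : ℝ) (a b : ℝ → ℝ → ℝ)
    (hB : ∀ t ∈ Icc 0 T, ∀ x, W t x ≤ B)
    (ha : ∀ t ∈ Icc 0 T, ∀ x, 0 ≤ a t x ∧ a t x ≤ A)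
    (hb : ∀ t ∈ Icc 0 T, ∀ x, |b t x| ≤ A)
    (heq : ∀ t ∈ Icc 0 T, ∀ x, dt W t x ≤ a t x * dx (dx W) t x + b t x * dx W t x)
    (h0 : ∀ x, W 0 x ≤ K) :
    ∀ t ∈ Icc 0 T, ∀ x, W t x ≤ K := by
  intro t1 ht1 x1
  have h0T : (0:ℝ) ∈ Icc 0 T := ⟨le_rfl, ht1.1.trans ht1.2⟩
  have hA : 0 ≤ A := (abs_nonneg _).trans (hb 0 h0T 0)
  -- penalised bound
  have key : ∀ ε > 0, ∀ δ > 0, 2 * δ * A + A * (2 * Real.sqrt (δ * |B - K|)) < ε →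
      W t1 x1 ≤ K + ε * t1 + δ * x1 ^ 2 := by
    intro ε hε δ hδ hsm
    by_contra hcon
    push Not at hcon
    set ψ : ℝ × ℝ → ℝ := fun q => W q.1 q.2 - ε * q.1 - δ * q.2 ^ 2 with hψ
    have hψc : Continuous ψ := by
      have := hW.cont
      fun_prop
    -- compact set
    obtain ⟨R, hR0, hR⟩ : ∃ R : ℝ, 0 ≤ R ∧ ∀ x, R < |x| → B - δ * x ^ 2 < K := by
      refine ⟨Real.sqrt (|B - K| / δ), Real.sqrt_nonneg _, fun x hx => ?_⟩
      have := (Real.sqrt_lt' ((Real.sqrt_nonneg _).trans_lt hx)).1 hx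
      rw [sq_abs, div_lt_iff₀ hδ] at this
      linarith [le_abs_self (B - K)]
    have hx1 : |x1| ≤ R := by
      by_contra h
      push Not at h
      have := hR x1 h
      have := hB t1 ht1 x1
      have : 0 ≤ ε * t1 := mul_nonneg hε.le ht1.1
      linarith
    have hcomp : IsCompact (Icc (0:ℝ) T ×ˢ Icc (-R) R) := isCompact_Icc.prod isCompact_Icc
    obtain ⟨⟨t0, x0⟩, hq0, hmax⟩ := hcomp.exists_isMaxOn
      ⟨(t1, x1), ⟨ht1, abs_le.1 hx1⟩⟩ hψc.continuousOn
    have hq1 : ψ (t1, x1) ≤ ψ (t0, x0) := hmax (show (t1, x1) ∈ _ from ⟨ht1, abs_le.1 hx1⟩)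
    have hK : K < ψ (t0, x0) := by
      refine lt_of_lt_of_le ?_ hq1
      simp only [hψ]; linarith
    have ht0 : t0 ∈ Icc 0 T := hq0.1
    have hmax' : ∀ t ∈ Icc 0 T, ∀ x, ψ (t, x) ≤ ψ (t0, x0) := by
      intro t ht x
      by_cases hx : |x| ≤ R
      · exact hmax (show (t, x) ∈ _ from ⟨ht, abs_le.1 hx⟩)
      · push Not at hx
        have h1 := hR x hx
        have h2 := hB t ht x
        have h3 : 0 ≤ ε * t := mul_nonneg hε.le ht.1
        have : ψ (t, x) < K := by simp only [hψ]; linarith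
        linarith
    -- t0 > 0
    have ht0pos : 0 < t0 := by
      rcases ht0.1.lt_or_eq with h | h
      · exact h
      · exfalso
        have := h0 x0
        have h3 : 0 ≤ δ * x0 ^ 2 := by positivity
        simp only [hψ] at hK
        rw [← h] at hK
        linarith
    -- space derivatives
    have hs := second_deriv_nonpos_of_max (fun x => ψ (t0, x))
      (fun x => dx W t0 x - δ * (2 * x)) (fun x => dx (dx W) t0 x - δ * 2)
      (fun x => by
        have h1 := (hW.hx t0 x).sub_const (ε * t0)
        have h2 := ((hasDerivAt_id x).pow 2).const_mul δ
        refine (h1.sub h2).congr_deriv ?_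
        simp)
      (fun x => by
        have h1 := (hW.dx.hx t0 x)
        have h2 := ((hasDerivAt_id x).const_mul 2).const_mul δ
        refine (h1.sub h2).congr_deriv ?_
        simp) x0 (fun x => hmax' t0 ht0 x)
    -- time derivative
    have htd : HasDerivAt (fun s => ψ (s, x0)) (dt W t0 x0 - ε) t0 := by
      have h1 := (hW.ht t0 x0)
      have h2 := (hasDerivAt_id t0).const_mul ε
      refine ((h1.sub h2).sub_const (δ * x0 ^ 2)).congr_deriv ?_
      simp
    have htn : 0 ≤ dt W t0 x0 - ε := by
      by_contra hneg
      push Not at hneg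
      have hsl := (hasDerivAt_iff_tendsto_slope.1 htd).eventually (gt_mem_nhds hneg)
      have hmem : Ioo 0 t0 ∈ nhdsWithin t0 (Iio t0) := Ioo_mem_nhdsLT ht0pos
      have hsub : Iio t0 ⊆ {t0}ᶜ := fun s hs => ne_of_lt hs
      have hsl2 := hsl.filter_mono (nhdsWithin_mono t0 hsub)
      obtain ⟨s, hs1, hs2⟩ := (hsl2.and hmem).exists
      rw [slope_def_field] at hs1
      have := hmax' s ⟨hs2.1.le, hs2.2.le.trans ht0.2⟩ x0
      have : 0 ≤ (ψ (s, x0) - ψ (t0, x0)) / (s - t0) :=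
        div_nonneg_of_nonpos (by linarith) (by linarith [hs2.2])
      linarith
    obtain ⟨hs1, hs2⟩ := hs
    have e := heq t0 ht0 x0
    have hx0 : δ * x0 ^ 2 ≤ |B - K| := by
      have := hB t0 ht0 x0
      have h3 : 0 ≤ ε * t0 := mul_nonneg hε.le ht0.1
      simp only [hψ] at hK
      linarith [le_abs_self (B - K)]
    have hwx : |dx W t0 x0| ≤ 2 * Real.sqrt (δ * |B - K|) := by
      have h1 : dx W t0 x0 = 2 * (δ * x0) := by linarith
      rw [h1, abs_mul, abs_two]
      refine mul_le_mul_of_nonneg_left ?_ (by norm_num)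
      refine Real.abs_le_sqrt ?_
      calc (δ * x0) ^ 2 = δ * (δ * x0 ^ 2) := by ring
        _ ≤ _ := mul_le_mul_of_nonneg_left hx0 hδ.le
    have b1 : a t0 x0 * dx (dx W) t0 x0 ≤ 2 * δ * A := by
      obtain ⟨a0, a1⟩ := ha t0 ht0 x0
      have : a t0 x0 * dx (dx W) t0 x0 ≤ a t0 x0 * (δ * 2) :=
        mul_le_mul_of_nonneg_left (by linarith) a0
      nlinarith
    have b2 : b t0 x0 * dx W t0 x0 ≤ A * (2 * Real.sqrt (δ * |B - K|)) := by
      refine (le_abs_self _).trans ?_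
      rw [abs_mul]
      exact mul_le_mul (hb t0 ht0 x0) hwx (abs_nonneg _) hA
    linarith
  -- let δ, ε → 0
  have key2 : ∀ ε > 0, W t1 x1 ≤ K + ε * t1 := by
    intro ε hε
    have c1 : Tendsto (fun δ : ℝ => 2 * δ * A + A * (2 * Real.sqrt (δ * |B - K|)))
        (nhdsWithin 0 (Ioi 0)) (nhds 0) := by
      have : Continuous (fun δ : ℝ => 2 * δ * A + A * (2 * Real.sqrt (δ * |B - K|))) := by
        fun_prop
      have h := (this.tendsto 0)
      simp only [mul_zero, zero_mul, Real.sqrt_zero, add_zero] at h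
      exact h.mono_left nhdsWithin_le_nhds
    have c2 : Tendsto (fun δ : ℝ => K + ε * t1 + δ * x1 ^ 2)
        (nhdsWithin 0 (Ioi 0)) (nhds (K + ε * t1)) := by
      have : Continuous (fun δ : ℝ => K + ε * t1 + δ * x1 ^ 2) := by
        fun_prop
      have h := (this.tendsto 0)
      simp only [zero_mul, add_zero] at h
      exact h.mono_left nhdsWithin_le_nhds
    refine ge_of_tendsto c2 ?_
    filter_upwards [c1.eventually (gt_mem_nhds hε), self_mem_nhdsWithin] with δ h1 h2
    exact key ε hε δ h2 h1
  have c2 : Tendsto (fun ε : ℝ => K + ε * t1) (nhdsWithin 0 (Ioi 0)) (nhds K) := by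
    have : Continuous (fun ε : ℝ => K + ε * t1) := by fun_prop
    have h := (this.tendsto 0)
    simp only [zero_mul, add_zero] at h
    exact h.mono_left nhdsWithin_le_nhds
  refine ge_of_tendsto c2 ?_
  filter_upwards [self_mem_nhdsWithin] with ε h2
  exact key2 ε h2


/-! ### The rarefaction wave: `∂ₓ²U` is dominated by `∂ₓU` -/

lemma Sm.chain {g : ℝ → ℝ → ℝ} (hg : Sm g) (X : ℝ → ℝ) (X' s : ℝ) (hX : HasDerivAt X X' s) :
    HasDerivAt (fun s => g s (X s)) (_root_.dt g s (X s) + X' * _root_.dx g s (X s)) s := by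
  have h1 : HasFDerivAt (fun q : ℝ × ℝ => g q.1 q.2) _ (s, X s) :=
    (ContDiff.differentiable hg (by simp) (s, X s)).hasFDerivAt
  have h2 : HasDerivAt (fun s : ℝ => (s, X s)) ((1:ℝ), X') s := (hasDerivAt_id s).prodMk hX
  refine (HasFDerivAt.comp_hasDerivAt (f := fun s : ℝ => (s, X s)) s h1 h2).congr_deriv ?_
  rw [hg.dx_eq, hg.dt_eq]
  have : ((1:ℝ), X') = (1, 0) + X' • ((0:ℝ), (1:ℝ)) := by simp
  rw [this, map_add, map_smul]
  rfl

lemma compact_bound (g : ℝ → ℝ) (hg : Continuous g) (a b : ℝ) :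
    ∃ L, 0 ≤ L ∧ ∀ z ∈ Icc a b, |g z| ≤ L := by
  obtain ⟨L, hL⟩ := isCompact_Icc.exists_bound_of_continuousOn (s := Icc a b) hg.continuousOn
  exact ⟨|L|, abs_nonneg _, fun z hz => (hL z hz).trans (le_abs_self _)⟩

lemma seg_mem {a b x y θ : ℝ} (hx : x ∈ Icc a b) (hy : x + y ∈ Icc a b) (hθ : θ ∈ Icc (0:ℝ) 1) :
    x + θ * y ∈ Icc a b := by
  obtain ⟨h1, h2⟩ := hx
  obtain ⟨h3, h4⟩ := hy
  obtain ⟨h5, h6⟩ := hθ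
  constructor <;> nlinarith

lemma char_const (f1 f2 : ℝ → ℝ) (hf1 : ∀ z, HasDerivAt f1 (f2 z) z)
    (cf2 : Continuous f2)
    (U : ℝ → ℝ → ℝ) (hU : Sm U) (um up CU : ℝ)
    (hpde : ∀ t, 0 ≤ t → ∀ x, dt U t x + f1 (U t x) * dx U t x = 0)
    (hbd : ∀ t, 0 ≤ t → ∀ x, U t x ∈ Icc um up)
    (hpos : ∀ t, 0 ≤ t → ∀ x, 0 < dx U t x) (hle : ∀ t, 0 ≤ t → ∀ x, dx U t x ≤ CU)
    (t0 : ℝ) (ht0 : 0 ≤ t0) (x s : ℝ) (hs : t0 ≤ s) :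
    U s (x + f1 (U t0 x) * (s - t0)) = U t0 x := by
  obtain ⟨L, hL0, hL⟩ := compact_bound f2 cf2 um up
  set a := U t0 x with ha
  have hX : ∀ r, HasDerivAt (fun r => x + f1 a * (r - t0)) (f1 a) r := by
    intro r
    simpa using (((hasDerivAt_id r).sub_const t0).const_mul (f1 a)).const_add x
  have hd : ∀ r, HasDerivAt (fun r => U r (x + f1 a * (r - t0)) - a)
      (dt U r (x + f1 a * (r - t0)) + f1 a * dx U r (x + f1 a * (r - t0))) r :=
    fun r => (hU.chain _ _ r (hX r)).sub_const a
  have := eq_zero_of_abs_deriv_le_mul_abs_self_of_eq_zero_right (K := L * CU)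
    (f := fun r => U r (x + f1 a * (r - t0)) - a) (a := t0) (b := s)
    (fun r _ => (hd r).continuousAt.continuousWithinAt) (fun r _ => (hd r).hasDerivWithinAt)
    (by simp [ha]) ?_ s ⟨hs, le_rfl⟩
  · linarith
  · intro r hr
    have hr0 : 0 ≤ r := ht0.trans hr.1
    set y := x + f1 a * (r - t0)
    have e := hpde r hr0 y
    obtain ⟨θ, hθ, hm⟩ := mvt_exists f1 f2 hf1 a (U r y - a)
    have hmem := seg_mem (x := a) (y := U r y - a) (hbd t0 ht0 x)
      (by simpa using hbd r hr0 y) hθ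
    have h2 := hL _ hmem
    have e2 : dt U r y + f1 a * dx U r y
        = -(f2 (a + θ * (U r y - a)) * (U r y - a) * dx U r y) := by
      rw [← hm]
      have : a + (U r y - a) = U r y := by ring
      rw [this]; linarith
    rw [e2, norm_neg, norm_mul, norm_mul, Real.norm_eq_abs, Real.norm_eq_abs, Real.norm_eq_abs,
      abs_of_pos (hpos r hr0 y)]
    have h3 := hle r hr0 y
    have h4 := abs_nonneg (U r y - a)
    have h5 := (hpos r hr0 y).le
    calc |f2 (a + θ * (U r y - a))| * |U r y - a| * dx U r y
        ≤ L * |U r y - a| * CU := by gcongr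
      _ = _ := by ring

lemma char_dom (f1 f2 f3 : ℝ → ℝ) (hf1 : ∀ z, HasDerivAt f1 (f2 z) z)
    (hf2 : ∀ z, HasDerivAt f2 (f3 z) z) (cf3 : Continuous f3)
    (hf2pos : ∀ z, 0 < f2 z)
    (U : ℝ → ℝ → ℝ) (hU : Sm U) (um up CU : ℝ) (hCU : 0 < CU)
    (hpde : ∀ t, 0 ≤ t → ∀ x, dt U t x + f1 (U t x) * dx U t x = 0)
    (hbd : ∀ t, 0 ≤ t → ∀ x, U t x ∈ Icc um up)
    (hpos : ∀ t, 0 ≤ t → ∀ x, 0 < dx U t x) (hle : ∀ t, 0 ≤ t → ∀ x, dx U t x ≤ CU)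
    (hxx : ∀ t, 0 ≤ t → ∀ x, |dx (dx U) t x| ≤ CU * (1 + t) ^ (-(9:ℝ)/8)) :
    ∃ C, ∀ t, 0 ≤ t → ∀ x, |dx (dx U) t x| ≤ C * dx U t x := by
  have cf2 : Continuous f2 := continuous_iff_continuousAt.2 fun z => (hf2 z).continuousAt
  obtain ⟨L, hL0, hL⟩ := compact_bound f2 cf2 um up
  obtain ⟨L3, hL30, hL3⟩ := compact_bound f3 cf3 um up
  refine ⟨(1 + L) ^ 3 * CU + L3 * CU, fun t0 ht0 x0 => ?_⟩
  have hw := hpos t0 ht0 x0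
  set w := dx U t0 x0 with hwdef
  set τ := w⁻¹ with hτ
  have hτ0 : 0 < τ := inv_pos.2 hw
  set s := t0 + τ with hs
  have hs0 : 0 ≤ s := by positivity
  have hst : t0 ≤ s := by linarith
  have hτs : s - t0 = τ := by simp [hs]
  have hc : ∀ x, U s (x + f1 (U t0 x) * τ) = U t0 x := fun x => by
    rw [← hτs]
    exact char_const f1 f2 hf1 cf2 U hU um up CU hpde hbd hpos hle t0 ht0 x s hst
  set Y : ℝ → ℝ := fun x => x + f1 (U t0 x) * τ with hY
  set D : ℝ → ℝ := fun x => 1 + f2 (U t0 x) * dx U t0 x * τ with hD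
  have hYd : ∀ x, HasDerivAt Y (D x) x := fun x => by
    have h1 := (hf1 (U t0 x)).comp x (hU.hx t0 x)
    exact (hasDerivAt_id x).add (h1.mul_const τ)
  have hP : ∀ x, dx U s (Y x) * D x = dx U t0 x := fun x => by
    have h1 := (hU.hx s (Y x)).comp x (hYd x)
    have h2 : (U s ∘ Y) = U t0 := funext hc
    rw [h2] at h1
    exact h1.unique (hU.hx t0 x)
  have hDd : ∀ x, HasDerivAt D
      ((f3 (U t0 x) * dx U t0 x * dx U t0 x + f2 (U t0 x) * dx (dx U) t0 x) * τ) x := fun x => by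
    have h1 := (hf2 (U t0 x)).comp x (hU.hx t0 x)
    exact ((h1.mul (hU.dx.hx t0 x)).mul_const τ).const_add 1
  have hP2 : dx (dx U) s (Y x0) * D x0 * D x0 + dx U s (Y x0) *
      ((f3 (U t0 x0) * w * w + f2 (U t0 x0) * dx (dx U) t0 x0) * τ)
      = dx (dx U) t0 x0 := by
    have h1 := ((hU.dx.hx s (Y x0)).comp x0 (hYd x0)).mul (hDd x0)
    have h2 : ((dx U s ∘ Y) * D) = dx U t0 := funext hP
    rw [h2] at h1
    exact h1.unique (hU.dx.hx t0 x0)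
  have hD0 : D x0 = 1 + f2 (U t0 x0) := by
    simp only [hD, hτ]
    rw [← hwdef]
    field_simp
  have hP0 := hP x0
  rw [← hwdef] at hP0
  have hwτ : w * τ = 1 := mul_inv_cancel₀ hw.ne'
  have key : dx (dx U) t0 x0 = dx (dx U) s (Y x0) * D x0 ^ 3 + f3 (U t0 x0) * w ^ 2 := by
    have e1 : D x0 * dx (dx U) t0 x0 = dx (dx U) s (Y x0) * D x0 ^ 3 +
      (dx U s (Y x0) * D x0) *
        ((f3 (U t0 x0) * w * w + f2 (U t0 x0) * dx (dx U) t0 x0) * τ) := by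
      linear_combination (-(D x0)) * hP2
    rw [hP0] at e1
    have e2 : w * ((f3 (U t0 x0) * w * w + f2 (U t0 x0) * dx (dx U) t0 x0) * τ)
      = (f3 (U t0 x0) * w * w + f2 (U t0 x0) * dx (dx U) t0 x0) * (w * τ) := by ring
    rw [e2, hwτ] at e1
    rw [hD0] at e1 ⊢
    linarith
  have hf2b : |D x0| ≤ 1 + L := by
    rw [hD0, abs_of_pos (by linarith [hf2pos (U t0 x0)])]
    have := hL _ (hbd t0 ht0 x0)
    linarith [le_abs_self (f2 (U t0 x0))]
  have hpow : (1 + s) ^ (-(9:ℝ)/8) ≤ w := by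
    have h1 : (1 + s) ^ (-(9:ℝ)/8) ≤ (1 + s) ^ (-1:ℝ) :=
      Real.rpow_le_rpow_of_exponent_le (by linarith) (by norm_num)
    rw [Real.rpow_neg_one] at h1
    refine h1.trans ?_
    rw [inv_le_comm₀ (by linarith) hw]
    linarith
  have h1 : |dx (dx U) s (Y x0)| ≤ CU * w :=
    (hxx s hs0 (Y x0)).trans (mul_le_mul_of_nonneg_left hpow hCU.le)
  have h3 := hL3 _ (hbd t0 ht0 x0)
  have h4 : w ≤ CU := hle t0 ht0 x0
  rw [key]
  calc |dx (dx U) s (Y x0) * D x0 ^ 3 + f3 (U t0 x0) * w ^ 2|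
      ≤ |dx (dx U) s (Y x0)| * |D x0| ^ 3 + |f3 (U t0 x0)| * (w * w) := by
        refine (abs_add_le _ _).trans ?_
        rw [abs_mul, abs_pow, abs_mul, abs_of_nonneg (sq_nonneg w), sq]
    _ ≤ CU * w * (1 + L) ^ 3 + L3 * (CU * w) := by gcongr
    _ = _ := by ring

lemma integrable_deriv_of_bdd (g g1 : ℝ → ℝ) (hg : ∀ x, HasDerivAt g (g1 x) x)
    (hc : Continuous g1) (h0 : ∀ x, 0 ≤ g1 x) (a b : ℝ) (hb : ∀ x, g x ∈ Icc a b) :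
    Integrable g1 := by
  refine integrable_of_intervalIntegral_norm_bounded (l := atTop) (a := fun n : ℝ => -n)
    (b := fun n => n) (b - a) (fun n => ?_) tendsto_neg_atTop_atBot tendsto_id
    (Eventually.of_forall fun n => ?_)
  · exact (hc.integrableOn_Icc).mono_set Ioc_subset_Icc_self
  · have : (fun x => ‖g1 x‖) = g1 := funext fun x => Real.norm_of_nonneg (h0 x)
    rw [this, integral_eq_sub_of_hasDerivAt (fun x _ => hg x) (hc.intervalIntegrable _ _)]
    linarith [(hb n).2, (hb (-n)).1]


/-! ### Estimates at a fixed time -/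

/-- all the data at one fixed time: `U1 = ∂ₓU`, `U2 = ∂ₓ²U`, `g = ∂ₜ∂ₓU`, `v = ∂ₓφ`, `v1 = ∂ₓ²φ`,
`h = ∂ₜφ`, `h1 = ∂ₜ∂ₓφ`. -/
structure Sl (σ s1 f f1 f2 : ℝ → ℝ) (c2 L1 L2 CU : ℝ)
    (U U1 U2 g φ v v1 h h1 : ℝ → ℝ) : Prop where
  hσ : ∀ z, HasDerivAt σ (s1 z) z
  cs1 : Continuous s1
  s1_nonneg : ∀ z, 0 ≤ s1 z
  s1_le : ∀ z, s1 z ≤ c2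
  hf : ∀ z, HasDerivAt f (f1 z) z
  hf1 : ∀ z, HasDerivAt f1 (f2 z) z
  cf2 : Continuous f2
  f2_nonneg : ∀ z, 0 ≤ f2 z
  hU : ∀ x, HasDerivAt U (U1 x) x
  hU1 : ∀ x, HasDerivAt U1 (U2 x) x
  hφ : ∀ x, HasDerivAt φ (v x) x
  hv : ∀ x, HasDerivAt v (v1 x) x
  hh : ∀ x, HasDerivAt h (h1 x) x
  U1_nonneg : ∀ x, 0 ≤ U1 x
  U1_le : ∀ x, U1 x ≤ CU
  f1_bd : ∀ x, ∀ θ ∈ Icc (0:ℝ) 1, |f1 (U x + θ * φ x)| ≤ L1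
  f2_bd : ∀ x, ∀ θ ∈ Icc (0:ℝ) 1, |f2 (U x + θ * φ x)| ≤ L2
  lU2 : CL2 U2
  lg : CL2 g
  lφ : CL2 φ
  lv : CL2 v
  lv1 : CL2 v1
  lh1 : CL2 h1
  heq : ∀ x, h x = -(f1 (U x + φ x) * (U1 x + v x) - f1 (U x) * U1 x)
    + s1 (U1 x + v x) * (U2 x + v1 x)

lemma cont_of_deriv {g g1 : ℝ → ℝ} (h : ∀ z, HasDerivAt g (g1 z) z) : Continuous g :=
  continuous_iff_continuousAt.2 fun z => (h z).continuousAt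

lemma gterm (V G Q CU : ℝ) (hV : 0 ≤ V) (hG : 0 ≤ G) (hQ : 0 ≤ Q) (hCU : 0 ≤ CU)
    (h1 : V ^ 2 ≤ (1 + V) * Q) (h2 : G ≤ CU) : V * G ≤ 2 * (1 + CU) * Q + G ^ 2 := by
  have hCQ : 0 ≤ CU * Q := mul_nonneg hCU hQ
  by_cases hv1 : V ≤ 1
  · have h3 : (1 + V) * Q ≤ 2 * Q := mul_le_mul_of_nonneg_right (by linarith) hQ
    have h4 : 2 * (V * G) ≤ V ^ 2 + G ^ 2 := by nlinarith [sq_nonneg (V - G)]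
    have h5 := mul_nonneg hV hG
    have h6 := sq_nonneg G
    have h7 : 2 * (1 + CU) * Q = 2 * Q + 2 * (CU * Q) := by ring
    linarith
  · push Not at hv1
    have h3 : V ≤ 2 * Q := by
      by_contra hc
      push Not at hc
      nlinarith
    have h4 : V * G ≤ (2 * Q) * CU := mul_le_mul h3 h2 hG (by linarith)
    have h6 := sq_nonneg G
    have h7 : 2 * (1 + CU) * Q = 2 * Q + 2 * Q * CU := by ring
    linarith

lemma quad_ineq (A B C D V : ℝ) : -((V + D + C - C) * (-(A + B) + (V + D + C)))
      ≤ - (V ^ 2 / 8) + A ^ 2 + B ^ 2 + C ^ 2 + D ^ 2 := by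
  linarith [sq_nonneg ((V + D) / 2 - A), sq_nonneg ((V + D) / 2 - B),
      sq_nonneg ((V + D) / 2 + C), sq_nonneg (V + 2 * D), sq_nonneg D]

section
variable {σ s1 f f1 f2 : ℝ → ℝ} {c2 L1 L2 CU : ℝ} {U U1 U2 g φ v v1 h h1 : ℝ → ℝ}

lemma Sl.s1_abs (H : Sl σ s1 f f1 f2 c2 L1 L2 CU U U1 U2 g φ v v1 h h1) (z : ℝ) : |s1 z| ≤ c2 := by
  rw [abs_of_nonneg (H.s1_nonneg z)]; exact H.s1_le z

lemma Sl.S_abs (H : Sl σ s1 f f1 f2 c2 L1 L2 CU U U1 U2 g φ v v1 h h1) (x : ℝ) :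
    |σ (U1 x + v x) - σ (U1 x)| ≤ c2 * |v x| := by
  obtain ⟨θ, -, e⟩ := mvt_exists σ s1 H.hσ (U1 x) (v x)
  rw [e, abs_mul]
  exact mul_le_mul_of_nonneg_right (H.s1_abs _) (abs_nonneg _)

lemma Sl.q_abs (H : Sl σ s1 f f1 f2 c2 L1 L2 CU U U1 U2 g φ v v1 h h1) (x : ℝ) :
    |f (U x + φ x) - f (U x)| ≤ L1 * |φ x| := by
  obtain ⟨θ, hθ, e⟩ := mvt_exists f f1 H.hf (U x) (φ x)
  rw [e, abs_mul]
  exact mul_le_mul_of_nonneg_right (H.f1_bd x θ hθ) (abs_nonneg _)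

lemma Sl.f1_diff (H : Sl σ s1 f f1 f2 c2 L1 L2 CU U U1 U2 g φ v v1 h h1) (x : ℝ) :
    |f1 (U x + φ x) - f1 (U x)| ≤ L2 * |φ x| := by
  obtain ⟨θ, hθ, e⟩ := mvt_exists f1 f2 H.hf1 (U x) (φ x)
  rw [e, abs_mul]
  exact mul_le_mul_of_nonneg_right (H.f2_bd x θ hθ) (abs_nonneg _)

lemma Sl.f1_abs (H : Sl σ s1 f f1 f2 c2 L1 L2 CU U U1 U2 g φ v v1 h h1) (x : ℝ) :
    |f1 (U x + φ x)| ≤ L1 := by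
  simpa using H.f1_bd x 1 ⟨zero_le_one, le_rfl⟩

lemma Sl.fd_abs (H : Sl σ s1 f f1 f2 c2 L1 L2 CU U U1 U2 g φ v v1 h h1) (x : ℝ) :
    |(f1 (U x + φ x) - f1 (U x)) * U1 x| ≤ L2 * CU * |φ x| := by
  rw [abs_mul, abs_of_nonneg (H.U1_nonneg x)]
  calc _ ≤ (L2 * |φ x|) * CU :=
        mul_le_mul (H.f1_diff x) (H.U1_le x) (H.U1_nonneg x) ((abs_nonneg _).trans (H.f1_diff x))
    _ = _ := by ring

lemma Sl.cU (H : Sl σ s1 f f1 f2 c2 L1 L2 CU U U1 U2 g φ v v1 h h1) : Continuous U :=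
  cont_of_deriv H.hU
lemma Sl.cU1 (H : Sl σ s1 f f1 f2 c2 L1 L2 CU U U1 U2 g φ v v1 h h1) : Continuous U1 :=
  cont_of_deriv H.hU1
lemma Sl.cσ (H : Sl σ s1 f f1 f2 c2 L1 L2 CU U U1 U2 g φ v v1 h h1) : Continuous σ :=
  cont_of_deriv H.hσ
lemma Sl.cf (H : Sl σ s1 f f1 f2 c2 L1 L2 CU U U1 U2 g φ v v1 h h1) : Continuous f :=
  cont_of_deriv H.hf
lemma Sl.cf1 (H : Sl σ s1 f f1 f2 c2 L1 L2 CU U U1 U2 g φ v v1 h h1) : Continuous f1 :=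
  cont_of_deriv H.hf1

lemma Sl.lS (H : Sl σ s1 f f1 f2 c2 L1 L2 CU U U1 U2 g φ v v1 h h1) :
    CL2 (fun x => σ (U1 x + v x) - σ (U1 x)) :=
  H.lv.dom ((H.cσ.comp (H.cU1.add H.lv.1)).sub (H.cσ.comp H.cU1)) c2 H.S_abs

lemma Sl.lq (H : Sl σ s1 f f1 f2 c2 L1 L2 CU U U1 U2 g φ v v1 h h1) :
    CL2 (fun x => f (U x + φ x) - f (U x)) :=
  H.lφ.dom ((H.cf.comp (H.cU.add H.lφ.1)).sub (H.cf.comp H.cU)) L1 H.q_abs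

lemma Sl.lq1 (H : Sl σ s1 f f1 f2 c2 L1 L2 CU U U1 U2 g φ v v1 h h1) :
    CL2 (fun x => f1 (U x + φ x) * (U1 x + v x) - f1 (U x) * U1 x) := by
  have a1 := H.lv.bdd_mul (H.cf1.comp (H.cU.add H.lφ.1)) L1 H.f1_abs
  have a2 : CL2 (fun x => (f1 (U x + φ x) - f1 (U x)) * U1 x) :=
    H.lφ.dom (((H.cf1.comp (H.cU.add H.lφ.1)).sub (H.cf1.comp H.cU)).mul H.cU1) _ H.fd_abs
  have := a1.add a2
  convert this using 2
  simp; ring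

lemma Sl.le (H : Sl σ s1 f f1 f2 c2 L1 L2 CU U U1 U2 g φ v v1 h h1) :
    CL2 (fun x => s1 (U1 x) * U2 x) :=
  H.lU2.bdd_mul (H.cs1.comp H.cU1) c2 (fun _ => H.s1_abs _)

lemma Sl.lw (H : Sl σ s1 f f1 f2 c2 L1 L2 CU U U1 U2 g φ v v1 h h1) :
    CL2 (fun x => s1 (U1 x + v x) * (U2 x + v1 x)) :=
  (H.lU2.add H.lv1).bdd_mul (H.cs1.comp (H.cU1.add H.lv.1)) c2 (fun _ => H.s1_abs _)

lemma Sl.lS1 (H : Sl σ s1 f f1 f2 c2 L1 L2 CU U U1 U2 g φ v v1 h h1) :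
    CL2 (fun x => s1 (U1 x + v x) * (U2 x + v1 x) - s1 (U1 x) * U2 x) := by
  have := H.lw.add H.le.neg
  simpa only [← sub_eq_add_neg] using this

lemma Sl.lh (H : Sl σ s1 f f1 f2 c2 L1 L2 CU U U1 U2 g φ v v1 h h1) : CL2 h := by
  have := H.lq1.neg.add H.lw
  convert this using 2
  exact H.heq _

lemma Sl.hS (H : Sl σ s1 f f1 f2 c2 L1 L2 CU U U1 U2 g φ v v1 h h1) (x : ℝ) :
    HasDerivAt (fun x => σ (U1 x + v x) - σ (U1 x))
      (s1 (U1 x + v x) * (U2 x + v1 x) - s1 (U1 x) * U2 x) x :=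
  ((H.hσ (U1 x + v x)).comp x ((H.hU1 x).add (H.hv x))).sub ((H.hσ (U1 x)).comp x (H.hU1 x))

lemma Sl.hq (H : Sl σ s1 f f1 f2 c2 L1 L2 CU U U1 U2 g φ v v1 h h1) (x : ℝ) :
    HasDerivAt (fun x => f (U x + φ x) - f (U x))
      (f1 (U x + φ x) * (U1 x + v x) - f1 (U x) * U1 x) x :=
  ((H.hf (U x + φ x)).comp x ((H.hU x).add (H.hφ x))).sub ((H.hf (U x)).comp x (H.hU x))

/-- the convective term has a good sign -/
lemma Sl.conv (H : Sl σ s1 f f1 f2 c2 L1 L2 CU U U1 U2 g φ v v1 h h1) :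
    ∫ x, v x * (f (U x + φ x) - f (U x)) ≤ 0 := by
  obtain ⟨F, hF⟩ := exists_antideriv f H.cf
  have hG : ∀ x, HasDerivAt (fun x => F (U x + φ x) - F (U x) - f (U x) * φ x)
      (v x * (f (U x + φ x) - f (U x)) + (f (U x + φ x) - f (U x) - f1 (U x) * φ x) * U1 x) x := by
    intro x
    have a1 := (hF (U x + φ x)).comp x ((H.hU x).add (H.hφ x))
    have a2 := (hF (U x)).comp x (H.hU x)
    have a3 := ((H.hf (U x)).comp x (H.hU x)).mul (H.hφ x)
    refine ((a1.sub a2).sub a3).congr_deriv ?_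
    simp only [Function.comp]; ring
  have t1 : ∀ x, |f (U x + φ x) - f (U x) - f1 (U x) * φ x| ≤ L2 / 2 * φ x ^ 2 := by
    intro x
    rw [abs_le]
    constructor
    · have := taylor2_lower f f1 f2 H.hf H.hf1 (U x) (φ x) (-L2)
        (fun θ hθ => (abs_le.1 (H.f2_bd x θ hθ)).1)
      linarith
    · exact taylor2_upper f f1 f2 H.hf H.hf1 (U x) (φ x) L2
        (fun θ hθ => (abs_le.1 (H.f2_bd x θ hθ)).2)
  have t0 : ∀ x, 0 ≤ f (U x + φ x) - f (U x) - f1 (U x) * φ x := by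
    intro x
    have := taylor2_lower f f1 f2 H.hf H.hf1 (U x) (φ x) 0 (fun θ hθ => H.f2_nonneg _)
    simpa using this
  have g1 : ∀ x, |F (U x + φ x) - F (U x) - f (U x) * φ x| ≤ L1 / 2 * φ x ^ 2 := by
    intro x
    rw [abs_le]
    constructor
    · have := taylor2_lower F f f1 hF H.hf (U x) (φ x) (-L1)
        (fun θ hθ => (abs_le.1 (H.f1_bd x θ hθ)).1)
      linarith
    · exact taylor2_upper F f f1 hF H.hf (U x) (φ x) L1
        (fun θ hθ => (abs_le.1 (H.f1_bd x θ hθ)).2)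
  have iG : Integrable (fun x => F (U x + φ x) - F (U x) - f (U x) * φ x) :=
    (H.lφ.2.const_mul (L1 / 2)).mono' (cont_of_deriv hG).aestronglyMeasurable
      (Eventually.of_forall g1)
  have iv := H.lv.mul H.lq
  have cU := H.cU
  have cU1 := H.cU1
  have cφ := H.lφ.1
  have cf := H.cf
  have cf1 := H.cf1
  have ir : Integrable (fun x => (f (U x + φ x) - f (U x) - f1 (U x) * φ x) * U1 x) := by
    refine (H.lφ.2.const_mul (L2 / 2 * CU)).mono'
      (Continuous.aestronglyMeasurable (by fun_prop)) (Eventually.of_forall fun x => ?_)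
    rw [norm_mul, Real.norm_eq_abs, Real.norm_eq_abs, abs_of_nonneg (H.U1_nonneg x)]
    calc _ ≤ (L2 / 2 * φ x ^ 2) * CU :=
          mul_le_mul (t1 x) (H.U1_le x) (H.U1_nonneg x) ((abs_nonneg _).trans (t1 x))
      _ = _ := by ring
  have e := integral_eq_zero_of_hasDerivAt_of_integrable hG (iv.add ir) iG
  rw [integral_add iv ir] at e
  have : 0 ≤ ∫ x, (f (U x + φ x) - f (U x) - f1 (U x) * φ x) * U1 x :=
    integral_nonneg fun x => mul_nonneg (t0 x) (H.U1_nonneg x)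
  linarith

lemma Sl.energy0 (H : Sl σ s1 f f1 f2 c2 L1 L2 CU U U1 U2 g φ v v1 h h1) :
    ∫ x, φ x * h x ≤ - (∫ x, v x * (σ (U1 x + v x) - σ (U1 x)))
      + ∫ x, φ x * (s1 (U1 x) * U2 x) := by
  have e : ∀ x, φ x * h x = -(φ x * (f1 (U x + φ x) * (U1 x + v x) - f1 (U x) * U1 x))
      + φ x * (s1 (U1 x + v x) * (U2 x + v1 x) - s1 (U1 x) * U2 x)
      + φ x * (s1 (U1 x) * U2 x) := fun x => by rw [H.heq]; ring
  simp only [e]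
  have i1 := H.lφ.mul H.lq1
  have i2 := H.lφ.mul H.lS1
  have i3 := H.lφ.mul H.le
  have i12 : Integrable (fun x =>
      -(φ x * (f1 (U x + φ x) * (U1 x + v x) - f1 (U x) * U1 x))
      + φ x * (s1 (U1 x + v x) * (U2 x + v1 x) - s1 (U1 x) * U2 x)) := i1.fun_neg.add i2
  rw [integral_add i12 i3, integral_add i1.fun_neg i2, MeasureTheory.integral_neg,
    H.lφ.parts H.lq H.lv H.lq1 H.hφ H.hq, H.lφ.parts H.lS H.lv H.lS1 H.hφ H.hS]
  have := H.conv
  linarith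

lemma Sl.energy1 (H : Sl σ s1 f f1 f2 c2 L1 L2 CU U U1 U2 g φ v v1 h h1) :
    ∫ x, (σ (U1 x + v x) - σ (U1 x)) * h1 x
      = - ∫ x, (s1 (U1 x + v x) * (U2 x + v1 x) - s1 (U1 x) * U2 x) * h x :=
  H.lS.parts H.lh H.lS1 H.lh1 H.hS H.hh

lemma Sl.h_sq (H : Sl σ s1 f f1 f2 c2 L1 L2 CU U U1 U2 g φ v v1 h h1) (x : ℝ) :
    h x ^ 2 ≤ 4 * (L1 ^ 2 * v x ^ 2 + (L2 * CU) ^ 2 * φ x ^ 2 + c2 ^ 2 * U2 x ^ 2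
      + c2 ^ 2 * v1 x ^ 2) := by
  have a1 : (f1 (U x + φ x) * v x) ^ 2 ≤ L1 ^ 2 * v x ^ 2 := by
    rw [mul_pow]
    exact mul_le_mul_of_nonneg_right (sq_le_sq' (abs_le.1 (H.f1_abs x)).1 (abs_le.1 (H.f1_abs x)).2)
      (sq_nonneg _)
  have a2 : ((f1 (U x + φ x) - f1 (U x)) * U1 x) ^ 2 ≤ (L2 * CU) ^ 2 * φ x ^ 2 := by
    rw [← sq_abs, ← sq_abs (φ x), ← mul_pow]
    exact pow_le_pow_left₀ (abs_nonneg _) (H.fd_abs x) 2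
  have s2 : s1 (U1 x + v x) ^ 2 ≤ c2 ^ 2 := pow_le_pow_left₀ (H.s1_nonneg _) (H.s1_le _) 2
  have a3 : (s1 (U1 x + v x) * U2 x) ^ 2 ≤ c2 ^ 2 * U2 x ^ 2 := by
    rw [mul_pow]; exact mul_le_mul_of_nonneg_right s2 (sq_nonneg _)
  have a4 : (s1 (U1 x + v x) * v1 x) ^ 2 ≤ c2 ^ 2 * v1 x ^ 2 := by
    rw [mul_pow]; exact mul_le_mul_of_nonneg_right s2 (sq_nonneg _)
  have e : h x = -(f1 (U x + φ x) * v x) - (f1 (U x + φ x) - f1 (U x)) * U1 x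
      + s1 (U1 x + v x) * U2 x + s1 (U1 x + v x) * v1 x := by rw [H.heq]; ring
  rw [e]
  set A := f1 (U x + φ x) * v x
  set B := (f1 (U x + φ x) - f1 (U x)) * U1 x
  set C := s1 (U1 x + v x) * U2 x
  set D := s1 (U1 x + v x) * v1 x
  nlinarith [sq_nonneg (A - B), sq_nonneg (A + C), sq_nonneg (A + D), sq_nonneg (B + C),
    sq_nonneg (B + D), sq_nonneg (C - D)]

/-- pointwise inequality behind the second energy estimate -/
lemma Sl.pointwise (H : Sl σ s1 f f1 f2 c2 L1 L2 CU U U1 U2 g φ v v1 h h1)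
    (κ p Np E : ℝ) (hκ : 0 < κ) (hp : 0 < p) (hCU : 0 < CU) (x : ℝ)
    (hκs : κ * (1 + v x ^ 2) ^ ((p - 1) / 2) ≤ s1 (U1 x + v x))
    (hN : v x ^ 2 ≤ Np * ((1 + v x ^ 2) ^ ((p - 1) / 2) * v x ^ 2))
    (hE : U1 x ≤ E) (hg : |g x| ≤ CU) :
    -((s1 (U1 x + v x) * (U2 x + v1 x) - s1 (U1 x) * U2 x) * h x)
      + (σ (U1 x + v x) - σ (U1 x) - s1 (U1 x) * v x) * g x
    ≤ - (κ ^ 2 / 8 * ((1 + v x ^ 2) ^ (p - 1) * v1 x ^ 2))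
      + (L1 ^ 2 * Np + 2 * c2 * (1 + CU)) * ((1 + v x ^ 2) ^ ((p - 1) / 2) * v x ^ 2)
      + (L2 * E) ^ 2 * φ x ^ 2 + 2 * c2 ^ 2 * U2 x ^ 2 + c2 * g x ^ 2 := by
  have hc2 : 0 ≤ c2 := (H.s1_nonneg 0).trans (H.s1_le 0)
  have hE0 : 0 ≤ E := (H.U1_nonneg x).trans hE
  have a1 : (f1 (U x + φ x) * v x) ^ 2 ≤ L1 ^ 2 * v x ^ 2 := by
    rw [mul_pow]
    exact mul_le_mul_of_nonneg_right (sq_le_sq' (abs_le.1 (H.f1_abs x)).1 (abs_le.1 (H.f1_abs x)).2)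
      (sq_nonneg _)
  have a2 : ((f1 (U x + φ x) - f1 (U x)) * U1 x) ^ 2 ≤ (L2 * E) ^ 2 * φ x ^ 2 := by
    rw [← sq_abs, ← sq_abs (φ x), ← mul_pow]
    refine pow_le_pow_left₀ (abs_nonneg _) ?_ 2
    rw [abs_mul, abs_of_nonneg (H.U1_nonneg x)]
    calc _ ≤ (L2 * |φ x|) * E :=
          mul_le_mul (H.f1_diff x) hE (H.U1_nonneg x) ((abs_nonneg _).trans (H.f1_diff x))
      _ = _ := by ring
  have a3 : (s1 (U1 x) * U2 x) ^ 2 ≤ c2 ^ 2 * U2 x ^ 2 := by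
    rw [mul_pow]; exact mul_le_mul_of_nonneg_right
      (pow_le_pow_left₀ (H.s1_nonneg _) (H.s1_le _) 2) (sq_nonneg _)
  have a4 : ((s1 (U1 x + v x) - s1 (U1 x)) * U2 x) ^ 2 ≤ c2 ^ 2 * U2 x ^ 2 := by
    rw [mul_pow]; exact mul_le_mul_of_nonneg_right
      (sq_le_sq' (by linarith [H.s1_nonneg (U1 x + v x), H.s1_le (U1 x)])
        (by linarith [H.s1_nonneg (U1 x), H.s1_le (U1 x + v x)])) (sq_nonneg _)
  have pos : 0 < 1 + v x ^ 2 := by positivity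
  have ew : (1 + v x ^ 2) ^ (p - 1) = ((1 + v x ^ 2) ^ ((p - 1) / 2)) ^ 2 := by
    rw [← Real.rpow_mul_natCast pos.le]; congr 1; push_cast; ring
  set ω := (1 + v x ^ 2) ^ ((p - 1) / 2) with hω
  have hω0 : 0 < ω := Real.rpow_pos_of_pos pos _
  have a5 : κ ^ 2 * (ω ^ 2 * v1 x ^ 2) ≤ (s1 (U1 x + v x) * v1 x) ^ 2 := by
    rw [mul_pow, ← mul_assoc, ← mul_pow]
    exact mul_le_mul_of_nonneg_right (pow_le_pow_left₀ (by positivity) hκs 2) (sq_nonneg _)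
  -- the `g` term
  have a6 : |σ (U1 x + v x) - σ (U1 x) - s1 (U1 x) * v x| ≤ c2 * |v x| := by
    obtain ⟨θ, -, e⟩ := mvt_exists σ s1 H.hσ (U1 x) (v x)
    rw [e, ← sub_mul, abs_mul]
    refine mul_le_mul_of_nonneg_right ?_ (abs_nonneg _)
    rw [abs_le]
    constructor <;> linarith [H.s1_nonneg (U1 x), H.s1_le (U1 x + θ * v x),
      H.s1_nonneg (U1 x + θ * v x), H.s1_le (U1 x)]
  have a7 : v x ^ 2 ≤ (1 + |v x|) * (ω * v x ^ 2) := by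
    have h1 : (1 + |v x|)⁻¹ ≤ ω := by
      have h2 : (1 + v x ^ 2) ^ (-(1:ℝ)/2) ≤ ω :=
        Real.rpow_le_rpow_of_exponent_le (by nlinarith [sq_nonneg (v x)]) (by linarith)
      refine le_trans ?_ h2
      have h3 : (1 + v x ^ 2) ^ (-(1:ℝ)/2) = (Real.sqrt (1 + v x ^ 2))⁻¹ := by
        rw [Real.sqrt_eq_rpow, ← Real.rpow_neg pos.le]; norm_num
      rw [h3]
      refine inv_anti₀ (Real.sqrt_pos.2 pos) ?_
      rw [Real.sqrt_le_iff]
      refine ⟨by positivity, ?_⟩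
      nlinarith [abs_nonneg (v x), sq_abs (v x)]
    have h2 : 1 ≤ (1 + |v x|) * ω := by
      have h3 : 0 < 1 + |v x| := by positivity
      calc (1:ℝ) = (1 + |v x|) * (1 + |v x|)⁻¹ := (mul_inv_cancel₀ h3.ne').symm
        _ ≤ _ := mul_le_mul_of_nonneg_left h1 h3.le
    nlinarith [sq_nonneg (v x)]
  have a8 : |v x| * |g x| ≤ 2 * (1 + CU) * (ω * v x ^ 2) + g x ^ 2 := by
    have := gterm |v x| |g x| (ω * v x ^ 2) CU (abs_nonneg _) (abs_nonneg _) (by positivity) hCU.le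
      (by rw [sq_abs]; exact a7) hg
    rwa [sq_abs] at this
  have a9 : (σ (U1 x + v x) - σ (U1 x) - s1 (U1 x) * v x) * g x
      ≤ c2 * (2 * (1 + CU) * (ω * v x ^ 2) + g x ^ 2) := by
    refine (le_abs_self _).trans ?_
    rw [abs_mul]
    calc _ ≤ c2 * |v x| * |g x| := mul_le_mul_of_nonneg_right a6 (abs_nonneg _)
      _ = c2 * (|v x| * |g x|) := by ring
      _ ≤ _ := mul_le_mul_of_nonneg_left a8 hc2
  have a10 : L1 ^ 2 * v x ^ 2 ≤ L1 ^ 2 * (Np * (ω * v x ^ 2)) :=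
    mul_le_mul_of_nonneg_left hN (sq_nonneg _)
  rw [ew, H.heq]
  set A := f1 (U x + φ x) * v x with hA
  set B := (f1 (U x + φ x) - f1 (U x)) * U1 x with hB
  set C := s1 (U1 x) * U2 x with hC
  set D := (s1 (U1 x + v x) - s1 (U1 x)) * U2 x with hD
  set V := s1 (U1 x + v x) * v1 x with hV
  have e1 : s1 (U1 x + v x) * (U2 x + v1 x) = V + D + C := by simp only [hV, hD, hC]; ring
  have e2 : f1 (U x + φ x) * (U1 x + v x) - f1 (U x) * U1 x = A + B := by
    simp only [hA, hB]; ring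
  rw [e1, e2]
  have a11 : -((V + D + C - C) * (-(A + B) + (V + D + C)))
      ≤ - (V ^ 2 / 8) + A ^ 2 + B ^ 2 + C ^ 2 + D ^ 2 := by
    exact quad_ineq A B C D V
  linarith
end


/-! ### Assembly -/

lemma int_abs_mul_le {a b : ℝ → ℝ} (ha : CL2 a) (hb : CL2 b) (A B : ℝ)
    (h1 : ∫ x, a x ^ 2 ≤ A) (h2 : ∫ x, b x ^ 2 ≤ B) : ∫ x, |a x * b x| ≤ A + B := by
  calc ∫ x, |a x * b x| ≤ ∫ x, (a x ^ 2 + b x ^ 2) := by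
        refine integral_mono (ha.mul hb).abs (ha.2.add hb.2) fun x => ?_
        simp only [abs_mul]
        nlinarith [sq_nonneg (|a x| - |b x|), sq_abs (a x), sq_abs (b x), abs_nonneg (a x),
          abs_nonneg (b x), mul_nonneg (abs_nonneg (a x)) (abs_nonneg (b x))]
    _ = (∫ x, a x ^ 2) + ∫ x, b x ^ 2 := integral_add ha.2 hb.2
    _ ≤ _ := add_le_add h1 h2

lemma int_sq_dom {a b : ℝ → ℝ} (ha : CL2 a) (hb : CL2 b) (C A : ℝ)
    (h : ∀ x, |b x| ≤ C * |a x|) (h1 : ∫ x, a x ^ 2 ≤ A) : ∫ x, b x ^ 2 ≤ C ^ 2 * A := by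
  calc ∫ x, b x ^ 2 ≤ ∫ x, C ^ 2 * a x ^ 2 := by
        refine integral_mono hb.2 (ha.2.const_mul _) fun x => ?_
        simp only
        rw [← sq_abs (b x), ← sq_abs (a x), ← mul_pow]
        exact pow_le_pow_left₀ (abs_nonneg _) (h x) 2
    _ = C ^ 2 * ∫ x, a x ^ 2 := MeasureTheory.integral_const_mul _ _
    _ ≤ _ := mul_le_mul_of_nonneg_left h1 (sq_nonneg _)

lemma sup_trick (y : ℝ → ℝ) (T B M K : ℝ) (hT : 0 ≤ T) (hM : 0 ≤ M) (hK : 0 ≤ K)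
    (hy0 : ∀ t ∈ Icc 0 T, 0 ≤ y t) (hB : ∀ t ∈ Icc 0 T, y t ≤ B)
    (h : ∀ Y, 0 ≤ Y → (∀ s ∈ Icc 0 T, y s ≤ Y ^ 2) → ∀ t ∈ Icc 0 T, y t ≤ M ^ 2 + K * Y) :
    ∀ t ∈ Icc 0 T, y t ≤ (M + K) ^ 2 := by
  set Y := sSup ((fun t => Real.sqrt (y t)) '' Icc 0 T) with hY
  have hbdd : BddAbove ((fun t => Real.sqrt (y t)) '' Icc 0 T) := by
    refine ⟨Real.sqrt B, ?_⟩
    rintro _ ⟨t, ht, rfl⟩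
    exact Real.sqrt_le_sqrt (hB t ht)
  have hne : ((fun t => Real.sqrt (y t)) '' Icc 0 T).Nonempty :=
    ⟨_, 0, ⟨le_rfl, hT⟩, rfl⟩
  have hle : ∀ t ∈ Icc 0 T, Real.sqrt (y t) ≤ Y := fun t ht => le_csSup hbdd ⟨t, ht, rfl⟩
  have hY0 : 0 ≤ Y := (Real.sqrt_nonneg _).trans (hle 0 ⟨le_rfl, hT⟩)
  have hsq : ∀ s ∈ Icc 0 T, y s ≤ Y ^ 2 := fun s hs => by
    exact (Real.sqrt_le_left hY0).1 (hle s hs)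
  have h1 := h Y hY0 hsq
  have h2 : Y ≤ Real.sqrt (M ^ 2 + K * Y) := by
    refine csSup_le hne ?_
    rintro _ ⟨t, ht, rfl⟩
    exact Real.sqrt_le_sqrt (h1 t ht)
  have h3 : Y ^ 2 ≤ M ^ 2 + K * Y := by
    have h4 : 0 ≤ M ^ 2 + K * Y := by positivity
    exact (Real.le_sqrt hY0 h4).1 h2
  have h5 : Y ≤ M + K := by
    by_contra hc
    push Not at hc
    nlinarith [mul_nonneg hM hK]
  intro t ht
  exact (hsq t ht).trans (pow_le_pow_left₀ hY0 h5 2)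

/-- global data for the two energy estimates -/
structure Gl (σ s1 f f1 f2 : ℝ → ℝ) (c2 L1 L2 CU T B : ℝ) (U φ : ℝ → ℝ → ℝ) : Prop where
  sl : ∀ t ∈ Icc 0 T, Sl σ s1 f f1 f2 c2 L1 L2 CU (U t) (dx U t) (dx (dx U) t) (dt (dx U) t)
    (φ t) (dx φ t) (dx (dx φ) t) (dt φ t) (dt (dx φ) t)
  sU : Sm U
  sφ : Sm φ
  hCU : 0 < CU
  hT : 0 ≤ T
  bφ : ∀ t ∈ Icc 0 T, ∫ x, φ t x ^ 2 ≤ B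
  bv : ∀ t ∈ Icc 0 T, ∫ x, dx φ t x ^ 2 ≤ B
  bv1 : ∀ t ∈ Icc 0 T, ∫ x, dx (dx φ) t x ^ 2 ≤ B
  bh1 : ∀ t ∈ Icc 0 T, ∫ x, dt (dx φ) t x ^ 2 ≤ B
  bU2 : ∀ t ∈ Icc 0 T, ∫ x, dx (dx U) t x ^ 2 ≤ (CU * (1 + t) ^ (-(9:ℝ)/8)) ^ 2
  bg : ∀ t ∈ Icc 0 T, ∫ x, dt (dx U) t x ^ 2 ≤ (CU * (1 + t)⁻¹) ^ 2
  U1_le : ∀ t ∈ Icc 0 T, ∀ x, dx U t x ≤ CU * (1 + t)⁻¹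
  g_le : ∀ t ∈ Icc 0 T, ∀ x, |dt (dx U) t x| ≤ CU

lemma omega_facts (t : ℝ) (ht : 0 ≤ t) : 0 < (1 + t) ^ (-(9:ℝ)/8) ∧ (1 + t) ^ (-(9:ℝ)/8) ≤ 1 ∧
    ((1 + t)⁻¹) ^ 2 ≤ (1 + t) ^ (-(9:ℝ)/8) ∧
    ((1 + t) ^ (-(9:ℝ)/8)) ^ 2 ≤ (1 + t) ^ (-(9:ℝ)/8) := by
  have h1 : 0 < (1 + t) ^ (-(9:ℝ)/8) := Real.rpow_pos_of_pos (by linarith) _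
  have h2 : (1 + t) ^ (-(9:ℝ)/8) ≤ 1 := Real.rpow_le_one_of_one_le_of_nonpos (by linarith) (by norm_num)
  refine ⟨h1, h2, ?_, by nlinarith⟩
  have : ((1 + t)⁻¹) ^ 2 = (1 + t) ^ (-2:ℝ) := by
    rw [Real.rpow_neg (by linarith), inv_pow]; norm_num
  rw [this]
  exact Real.rpow_le_rpow_of_exponent_le (by linarith) (by norm_num)

section
variable {σ s1 f f1 f2 : ℝ → ℝ} {c2 L1 L2 CU T B : ℝ} {U φ : ℝ → ℝ → ℝ}

lemma Gl.bh (G : Gl σ s1 f f1 f2 c2 L1 L2 CU T B U φ) (t : ℝ) (ht : t ∈ Icc 0 T) :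
    ∫ x, dt φ t x ^ 2 ≤ 4 * (L1 ^ 2 * B + (L2 * CU) ^ 2 * B + c2 ^ 2 * CU ^ 2 + c2 ^ 2 * B) := by
  have H := G.sl t ht
  have i1 := H.lv.2.const_mul (L1 ^ 2)
  have i2 := H.lφ.2.const_mul ((L2 * CU) ^ 2)
  have i3 := H.lU2.2.const_mul (c2 ^ 2)
  have i4 := H.lv1.2.const_mul (c2 ^ 2)
  have i12 : Integrable (fun x => L1 ^ 2 * dx φ t x ^ 2 + (L2 * CU) ^ 2 * φ t x ^ 2) := i1.add i2
  have i123 : Integrable (fun x => L1 ^ 2 * dx φ t x ^ 2 + (L2 * CU) ^ 2 * φ t x ^ 2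
    + c2 ^ 2 * dx (dx U) t x ^ 2) := i12.add i3
  have i1234 : Integrable (fun x => L1 ^ 2 * dx φ t x ^ 2 + (L2 * CU) ^ 2 * φ t x ^ 2
    + c2 ^ 2 * dx (dx U) t x ^ 2 + c2 ^ 2 * dx (dx φ) t x ^ 2) := i123.add i4
  have h := integral_mono H.lh.2 (i1234.const_mul 4) H.h_sq
  rw [MeasureTheory.integral_const_mul, integral_add i123 i4, integral_add i12 i3, integral_add i1 i2,
    MeasureTheory.integral_const_mul, MeasureTheory.integral_const_mul, MeasureTheory.integral_const_mul, MeasureTheory.integral_const_mul] at h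
  refine h.trans ?_
  have hU2 : ∫ x, dx (dx U) t x ^ 2 ≤ CU ^ 2 := by
    refine (G.bU2 t ht).trans ?_
    obtain ⟨o1, o2, -, -⟩ := omega_facts t ht.1
    have := G.hCU
    exact pow_le_pow_left₀ (by positivity) (by nlinarith) 2
  have := G.bφ t ht
  have := G.bv t ht
  have := G.bv1 t ht
  gcongr

lemma Gl.est0 (G : Gl σ s1 f f1 f2 c2 L1 L2 CU T B U φ) (Y : ℝ) (hY : 0 ≤ Y)
    (hyY : ∀ s ∈ Icc 0 T, ∫ x, φ s x ^ 2 ≤ Y ^ 2) (t : ℝ) (ht : t ∈ Icc 0 T) :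
    IntervalIntegrable (fun s => ∫ x, dx φ s x * (σ (dx U s x + dx φ s x) - σ (dx U s x)))
      volume 0 t ∧
    (∫ x, φ t x ^ 2) + 2 * (∫ s in (0:ℝ)..t, ∫ x, dx φ s x *
      (σ (dx U s x + dx φ s x) - σ (dx U s x))) ≤ (∫ x, φ 0 x ^ 2) + 16 * c2 * CU * Y := by
  have h0T : (0:ℝ) ∈ Icc 0 T := ⟨le_rfl, G.hT⟩
  have hc2 : 0 ≤ c2 := ((G.sl 0 h0T).s1_nonneg 0).trans ((G.sl 0 h0T).s1_le 0)
  have cφ := G.sφ.cont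
  have ch := G.sφ.dt.cont
  have cv := G.sφ.dx.cont
  have cU1 := G.sU.dx.cont
  have cσ := (G.sl 0 h0T).cσ
  set Bh := 4 * (L1 ^ 2 * B + (L2 * CU) ^ 2 * B + c2 ^ 2 * CU ^ 2 + c2 ^ 2 * B)
  have hi : ∀ s ∈ Icc 0 T, Integrable (fun x => 2 * (φ s x * dt φ s x)) :=
    fun s hs => ((G.sl s hs).lφ.mul (G.sl s hs).lh).const_mul 2
  have hBi : ∀ s ∈ Icc 0 T, ∫ x, |2 * (φ s x * dt φ s x)| ≤ 2 * (B + Bh) := by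
    intro s hs
    have := int_abs_mul_le (G.sl s hs).lφ (G.sl s hs).lh B Bh (G.bφ s hs) (G.bh s hs)
    simp only [abs_mul (2:ℝ), abs_two]
    rw [MeasureTheory.integral_const_mul]
    linarith
  have hcont : Continuous (fun q : ℝ × ℝ => 2 * (φ q.1 q.2 * dt φ q.1 q.2)) := by fun_prop
  have ftc := time_ftc (fun s x => φ s x ^ 2) (fun s x => 2 * (φ s x * dt φ s x)) hcont T
    (2 * (B + Bh)) (fun s x => by
      refine ((G.sφ.ht s x).pow 2).congr_deriv ?_
      simp; ring) (fun s hs => (G.sl s hs).lφ.2) hi hBi t ht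
  have ii := time_integrable (fun s x => 2 * (φ s x * dt φ s x)) hcont T (2 * (B + Bh)) hi hBi t ht
  have iD := time_integrable (fun s x => dx φ s x * (σ (dx U s x + dx φ s x) - σ (dx U s x)))
    (by fun_prop) T (B + c2 ^ 2 * B) (fun s hs => (G.sl s hs).lv.mul (G.sl s hs).lS)
    (fun s hs => int_abs_mul_le (G.sl s hs).lv (G.sl s hs).lS _ _ (G.bv s hs)
      (int_sq_dom (G.sl s hs).lv (G.sl s hs).lS c2 B (G.sl s hs).S_abs (G.bv s hs))) t ht
  refine ⟨iD, ?_⟩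
  obtain ⟨iω, hω⟩ := weight_int t ht.1
  have hmono := integral_mono_on ht.1 ii
    (((iD.const_mul (-2)).add (iω.const_mul (2 * c2 * CU * Y)))) (fun s hs => by
      have hs' : s ∈ Icc 0 T := ⟨hs.1, hs.2.trans ht.2⟩
      have H := G.sl s hs'
      have e0 := H.energy0
      obtain ⟨o1, -, -, -⟩ := omega_facts s hs'.1
      have hA := G.hCU
      have b1 := int_sq_dom H.lU2 H.le c2 _ (fun x => by
        rw [abs_mul]; exact mul_le_mul_of_nonneg_right (H.s1_abs _) (abs_nonneg _)) (G.bU2 s hs')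
      rw [← mul_pow] at b1
      have b2 := cauchy_schwarz H.lφ H.le Y (c2 * (CU * (1 + s) ^ (-(9:ℝ)/8))) hY
        (by positivity) (hyY s hs') b1
      have b3 : ∫ x, φ s x * (s1 (dx U s x) * dx (dx U) s x)
          ≤ ∫ x, |φ s x * (s1 (dx U s x) * dx (dx U) s x)| :=
        integral_mono (H.lφ.mul H.le) (H.lφ.mul H.le).abs (fun x => le_abs_self _)
      rw [MeasureTheory.integral_const_mul]
      linarith)
  rw [intervalIntegral.integral_add (iD.const_mul _) (iω.const_mul _),
    intervalIntegral.integral_const_mul, intervalIntegral.integral_const_mul] at hmono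
  have : 2 * c2 * CU * Y * (∫ s in (0:ℝ)..t, (1 + s) ^ (-(9:ℝ)/8)) ≤ 2 * c2 * CU * Y * 8 := by
    have := G.hCU
    exact mul_le_mul_of_nonneg_left hω (by positivity)
  linarith

lemma Gl.est0' (G : Gl σ s1 f f1 f2 c2 L1 L2 CU T B U φ) (M : ℝ) (hM : 0 ≤ M)
    (h0 : ∫ x, φ 0 x ^ 2 ≤ M ^ 2) (t : ℝ) (ht : t ∈ Icc 0 T) :
    IntervalIntegrable (fun s => ∫ x, dx φ s x * (σ (dx U s x + dx φ s x) - σ (dx U s x)))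
      volume 0 t ∧
    (∫ x, φ t x ^ 2) ≤ (M + 16 * c2 * CU) ^ 2 ∧
    2 * (∫ s in (0:ℝ)..t, ∫ x, dx φ s x *
      (σ (dx U s x + dx φ s x) - σ (dx U s x))) ≤ (M + 16 * c2 * CU) ^ 2 := by
  have h0T : (0:ℝ) ∈ Icc 0 T := ⟨le_rfl, G.hT⟩
  have hc2 : 0 ≤ c2 := ((G.sl 0 h0T).s1_nonneg 0).trans ((G.sl 0 h0T).s1_le 0)
  have hCU := G.hCU
  have hD : ∀ t ∈ Icc 0 T, 0 ≤ ∫ s in (0:ℝ)..t, ∫ x, dx φ s x *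
      (σ (dx U s x + dx φ s x) - σ (dx U s x)) := by
    intro t ht
    refine intervalIntegral.integral_nonneg ht.1 fun s hs => integral_nonneg fun x => ?_
    have H := G.sl s ⟨hs.1, hs.2.trans ht.2⟩
    obtain ⟨θ, -, e⟩ := mvt_exists σ s1 H.hσ (dx U s x) (dx φ s x)
    simp only
    rw [e]
    have : dx φ s x * (s1 (dx U s x + θ * dx φ s x) * dx φ s x)
      = s1 (dx U s x + θ * dx φ s x) * dx φ s x ^ 2 := by ring
    rw [this]
    exact mul_nonneg (H.s1_nonneg _) (sq_nonneg _)
  have hs := sup_trick (fun t => ∫ x, φ t x ^ 2) T B M (16 * c2 * CU) G.hT hM (by positivity)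
    (fun t _ => integral_nonneg fun x => sq_nonneg _) G.bφ
    (fun Y hY hyY t ht => by
      have h1 := (G.est0 Y hY hyY t ht).2
      have h2 := hD t ht
      linarith)
  obtain ⟨h1, h2⟩ := G.est0 (M + 16 * c2 * CU) (by positivity) hs t ht
  refine ⟨h1, hs t ht, ?_⟩
  have h3 : 0 ≤ ∫ x, φ t x ^ 2 := integral_nonneg fun x => sq_nonneg _
  have h4 : 0 ≤ M * (16 * c2 * CU) := by positivity
  nlinarith
end


/-! ### The second energy estimate -/

section
variable {σ s1 f f1 f2 : ℝ → ℝ} {c2 L1 L2 CU : ℝ} {U U1 U2 g φ v v1 h h1 : ℝ → ℝ}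

lemma Sl.P_abs (H : Sl σ s1 f f1 f2 c2 L1 L2 CU U U1 U2 g φ v v1 h h1) (x : ℝ) :
    |σ (U1 x + v x) - σ (U1 x) - s1 (U1 x) * v x| ≤ c2 * |v x| := by
  obtain ⟨θ, -, e⟩ := mvt_exists σ s1 H.hσ (U1 x) (v x)
  rw [e, ← sub_mul, abs_mul]
  refine mul_le_mul_of_nonneg_right ?_ (abs_nonneg _)
  rw [abs_le]
  constructor <;> linarith [H.s1_nonneg (U1 x), H.s1_le (U1 x + θ * v x),
    H.s1_nonneg (U1 x + θ * v x), H.s1_le (U1 x)]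

lemma Sl.lP (H : Sl σ s1 f f1 f2 c2 L1 L2 CU U U1 U2 g φ v v1 h h1) :
    CL2 (fun x => σ (U1 x + v x) - σ (U1 x) - s1 (U1 x) * v x) := by
  have := H.cσ
  have := H.cU1
  have := H.lv.1
  have := H.cs1
  exact H.lv.dom (by fun_prop) c2 H.P_abs

lemma wt_le {r : ℝ} (hr : r ≤ 0) (z : ℝ) : 0 < (1 + z ^ 2) ^ r ∧ (1 + z ^ 2) ^ r ≤ 1 :=
  ⟨Real.rpow_pos_of_pos (by positivity) _,
    Real.rpow_le_one_of_one_le_of_nonpos (by nlinarith [sq_nonneg z]) hr⟩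

lemma wt_cont {X : Type*} [TopologicalSpace X] {v : X → ℝ} (hv : Continuous v) (r : ℝ) :
    Continuous (fun x => (1 + v x ^ 2) ^ r) :=
  Continuous.rpow_const (by fun_prop) (fun x => Or.inl (by positivity))

lemma wt_int {r : ℝ} (hr : r ≤ 0) {v w : ℝ → ℝ} (hv : Continuous v) (hw : CL2 w) :
    Integrable (fun x => (1 + v x ^ 2) ^ r * w x ^ 2) := by
  refine hw.2.mono' ((wt_cont hv r).mul (hw.1.pow 2)).aestronglyMeasurable
    (Eventually.of_forall fun x => ?_)
  obtain ⟨h1, h2⟩ := wt_le hr (v x)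
  rw [Real.norm_eq_abs, abs_of_nonneg (by positivity)]
  nlinarith [sq_nonneg (w x)]

lemma wt_int_le {r : ℝ} (hr : r ≤ 0) {v w : ℝ → ℝ} (hv : Continuous v) (hw : CL2 w) :
    ∫ x, |(1 + v x ^ 2) ^ r * w x ^ 2| ≤ ∫ x, w x ^ 2 := by
  refine integral_mono (wt_int hr hv hw).abs hw.2 fun x => ?_
  obtain ⟨h1, h2⟩ := wt_le hr (v x)
  simp only
  rw [abs_of_nonneg (by positivity)]
  nlinarith [sq_nonneg (w x)]

lemma Sl.diss (H : Sl σ s1 f f1 f2 c2 L1 L2 CU U U1 U2 g φ v v1 h h1)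
    (κ p Np E : ℝ) (hκ : 0 < κ) (hp : 0 < p) (hp1 : p < 1) (hCU : 0 < CU)
    (hκs : ∀ x, κ * (1 + v x ^ 2) ^ ((p - 1) / 2) ≤ s1 (U1 x + v x))
    (hN : ∀ x, v x ^ 2 ≤ Np * ((1 + v x ^ 2) ^ ((p - 1) / 2) * v x ^ 2))
    (hE : ∀ x, U1 x ≤ E) (hg : ∀ x, |g x| ≤ CU) :
    ∫ x, ((σ (U1 x + v x) - σ (U1 x)) * h1 x
      + (σ (U1 x + v x) - σ (U1 x) - s1 (U1 x) * v x) * g x)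
    ≤ - (κ ^ 2 / 8 * ∫ x, (1 + v x ^ 2) ^ (p - 1) * v1 x ^ 2)
      + (L1 ^ 2 * Np + 2 * c2 * (1 + CU)) * (∫ x, (1 + v x ^ 2) ^ ((p - 1) / 2) * v x ^ 2)
      + (L2 * E) ^ 2 * (∫ x, φ x ^ 2) + 2 * c2 ^ 2 * (∫ x, U2 x ^ 2) + c2 * ∫ x, g x ^ 2 := by
  have iA := H.lS.mul H.lh1
  have iB := H.lP.mul H.lg
  have iC := (H.lS1.mul H.lh).fun_neg
  rw [integral_add iA iB, H.energy1, ← MeasureTheory.integral_neg, ← integral_add iC iB]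
  have j1 := ((wt_int (r := p - 1) (by linarith) H.lv.1 H.lv1).const_mul (κ ^ 2 / 8)).fun_neg
  have j2 := (wt_int (r := (p - 1) / 2) (by linarith) H.lv.1 H.lv).const_mul
    (L1 ^ 2 * Np + 2 * c2 * (1 + CU))
  have j3 := H.lφ.2.const_mul ((L2 * E) ^ 2)
  have j4 := H.lU2.2.const_mul (2 * c2 ^ 2)
  have j5 := H.lg.2.const_mul c2
  have j12 := j1.fun_add j2
  have j123 := j12.fun_add j3
  have j1234 := j123.fun_add j4
  have j12345 := j1234.fun_add j5
  have hm := integral_mono (iC.fun_add iB) j12345 (fun x =>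
    H.pointwise κ p Np E hκ hp hCU x (hκs x) (hN x) (hE x) (hg x))
  rw [integral_add j1234 j5, integral_add j123 j4, integral_add j12 j3, integral_add j1 j2,
    MeasureTheory.integral_neg] at hm
  simp only [MeasureTheory.integral_const_mul] at hm
  exact hm

lemma Sl.coer (H : Sl σ s1 f f1 f2 c2 L1 L2 CU U U1 U2 g φ v v1 h h1)
    (κ p : ℝ) (hp1 : p < 1)
    (hκs : ∀ x, ∀ θ ∈ Icc (0:ℝ) 1, κ * (1 + v x ^ 2) ^ ((p - 1) / 2) ≤ s1 (U1 x + θ * v x)) :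
    κ * (∫ x, (1 + v x ^ 2) ^ ((p - 1) / 2) * v x ^ 2)
      ≤ ∫ x, v x * (σ (U1 x + v x) - σ (U1 x)) := by
  rw [← MeasureTheory.integral_const_mul]
  refine integral_mono ((wt_int (by linarith) H.lv.1 H.lv).const_mul κ) (H.lv.mul H.lS) fun x => ?_
  obtain ⟨θ, hθ, e⟩ := mvt_exists σ s1 H.hσ (U1 x) (v x)
  have := mul_le_mul_of_nonneg_right (hκs x θ hθ) (sq_nonneg (v x))
  simp only
  rw [e]
  linarith
end

section
variable {σ s1 f f1 f2 : ℝ → ℝ} {c2 L1 L2 CU T B : ℝ} {U φ : ℝ → ℝ → ℝ}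

lemma Gl.est1 (G : Gl σ s1 f f1 f2 c2 L1 L2 CU T B U φ) (M κ p Np : ℝ) (hM : 0 ≤ M)
    (hκ : 0 < κ) (hp : 0 < p) (hp1 : p < 1) (hNp : 1 ≤ Np)
    (h0 : ∫ x, φ 0 x ^ 2 ≤ M ^ 2) (hv0 : ∫ x, dx φ 0 x ^ 2 ≤ M ^ 2)
    (hκs : ∀ t ∈ Icc 0 T, ∀ x, ∀ θ ∈ Icc (0:ℝ) 1,
      κ * (1 + dx φ t x ^ 2) ^ ((p - 1) / 2) ≤ s1 (dx U t x + θ * dx φ t x))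
    (hN : ∀ t ∈ Icc 0 T, ∀ x,
      dx φ t x ^ 2 ≤ Np * ((1 + dx φ t x ^ 2) ^ ((p - 1) / 2) * dx φ t x ^ 2))
    (t : ℝ) (ht : t ∈ Icc 0 T) :
    κ / 2 * (∫ x, (1 + dx φ t x ^ 2) ^ ((p - 1) / 2) * dx φ t x ^ 2)
      + κ ^ 2 / 8 * (∫ s in (0:ℝ)..t, ∫ x, (1 + dx φ s x ^ 2) ^ (p - 1) * dx (dx φ) s x ^ 2)
    ≤ (c2 / 2 * M ^ 2 + (L1 ^ 2 + 2 * c2 * (1 + CU)) * ((M + 16 * c2 * CU) ^ 2 / (2 * κ))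
      + 8 * (L2 ^ 2 * CU ^ 2 * (M + 16 * c2 * CU) ^ 2 + 2 * c2 ^ 2 * CU ^ 2 + c2 * CU ^ 2)) * Np := by
  have h0T : (0:ℝ) ∈ Icc 0 T := ⟨le_rfl, G.hT⟩
  have hc2 : 0 ≤ c2 := ((G.sl 0 h0T).s1_nonneg 0).trans ((G.sl 0 h0T).s1_le 0)
  have hCU := G.hCU
  have cv := G.sφ.dx.cont
  have cv1 := G.sφ.dx.dx.cont
  have ch1 := G.sφ.dx.dt.cont
  have cU1 := G.sU.dx.cont
  have cg := G.sU.dx.dt.cont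
  have cσ := (G.sl 0 h0T).cσ
  have cs1 := (G.sl 0 h0T).cs1
  have hσ := (G.sl 0 h0T).hσ
  obtain ⟨F, hF⟩ := exists_antideriv σ cσ
  have cF := cont_of_deriv hF
  set Yb := M + 16 * c2 * CU with hYb
  set K2 := L2 ^ 2 * CU ^ 2 * Yb ^ 2 + 2 * c2 ^ 2 * CU ^ 2 + c2 * CU ^ 2 with hK2
  set A := L1 ^ 2 * Np + 2 * c2 * (1 + CU) with hA
  -- the energy density
  have Pl : ∀ s ∈ Icc 0 T, ∀ x, κ / 2 * ((1 + dx φ s x ^ 2) ^ ((p - 1) / 2) * dx φ s x ^ 2)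
      ≤ F (dx U s x + dx φ s x) - F (dx U s x) - σ (dx U s x) * dx φ s x := by
    intro s hs x
    have := taylor2_lower F σ s1 hF hσ (dx U s x) (dx φ s x) _ (hκs s hs x)
    linarith
  have Pu : ∀ s x, F (dx U s x + dx φ s x) - F (dx U s x) - σ (dx U s x) * dx φ s x
      ≤ c2 / 2 * dx φ s x ^ 2 := by
    intro s x
    exact taylor2_upper F σ s1 hF hσ (dx U s x) (dx φ s x) c2 (fun θ _ => (G.sl 0 h0T).s1_le _)
  have iP : ∀ s ∈ Icc 0 T, Integrable (fun x =>
      F (dx U s x + dx φ s x) - F (dx U s x) - σ (dx U s x) * dx φ s x) := by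
    intro s hs
    have a1 := (G.sl s hs).cU1
    have a2 := (G.sl s hs).lv.1
    refine ((G.sl s hs).lv.2.const_mul (c2 / 2)).mono'
      (Continuous.aestronglyMeasurable (by fun_prop)) (Eventually.of_forall fun x => ?_)
    rw [Real.norm_eq_abs, abs_of_nonneg]
    · exact Pu s x
    · refine le_trans ?_ (Pl s hs x)
      have := (wt_le (r := (p - 1) / 2) (by linarith) (dx φ s x)).1
      positivity
  have hcont : Continuous (fun q : ℝ × ℝ =>
      (σ (dx U q.1 q.2 + dx φ q.1 q.2) - σ (dx U q.1 q.2)) * dt (dx φ) q.1 q.2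
      + (σ (dx U q.1 q.2 + dx φ q.1 q.2) - σ (dx U q.1 q.2) - s1 (dx U q.1 q.2) * dx φ q.1 q.2)
        * dt (dx U) q.1 q.2) := by fun_prop
  have hi : ∀ s ∈ Icc 0 T, Integrable (fun x =>
      (σ (dx U s x + dx φ s x) - σ (dx U s x)) * dt (dx φ) s x
      + (σ (dx U s x + dx φ s x) - σ (dx U s x) - s1 (dx U s x) * dx φ s x)
        * dt (dx U) s x) := fun s hs =>
    ((G.sl s hs).lS.mul (G.sl s hs).lh1).fun_add ((G.sl s hs).lP.mul (G.sl s hs).lg)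
  have bg' : ∀ s ∈ Icc 0 T, ∫ x, dt (dx U) s x ^ 2 ≤ CU ^ 2 := by
    intro s hs
    refine (G.bg s hs).trans (pow_le_pow_left₀ ?_ ?_ 2)
    · have := hs.1
      positivity
    · have : (1 + s)⁻¹ ≤ 1 := inv_le_one_of_one_le₀ (by linarith [hs.1])
      nlinarith
  have hBi : ∀ s ∈ Icc 0 T, ∫ x,
      |(σ (dx U s x + dx φ s x) - σ (dx U s x)) * dt (dx φ) s x
      + (σ (dx U s x + dx φ s x) - σ (dx U s x) - s1 (dx U s x) * dx φ s x)
        * dt (dx U) s x| ≤ (c2 ^ 2 * B + B) + (c2 ^ 2 * B + CU ^ 2) := by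
    intro s hs
    have H := G.sl s hs
    have b1 := int_abs_mul_le H.lS H.lh1 _ _ (int_sq_dom H.lv H.lS c2 B H.S_abs (G.bv s hs))
      (G.bh1 s hs)
    have b2 := int_abs_mul_le H.lP H.lg _ _ (int_sq_dom H.lv H.lP c2 B H.P_abs (G.bv s hs))
      (bg' s hs)
    refine le_trans ?_ (add_le_add b1 b2)
    rw [← integral_add (H.lS.mul H.lh1).abs (H.lP.mul H.lg).abs]
    exact integral_mono (hi s hs).abs ((H.lS.mul H.lh1).abs.fun_add (H.lP.mul H.lg).abs)
      (fun x => abs_add_le _ _)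
  have ftc := time_ftc (fun s x =>
      F (dx U s x + dx φ s x) - F (dx U s x) - σ (dx U s x) * dx φ s x) (fun s x =>
      (σ (dx U s x + dx φ s x) - σ (dx U s x)) * dt (dx φ) s x
      + (σ (dx U s x + dx φ s x) - σ (dx U s x) - s1 (dx U s x) * dx φ s x)
        * dt (dx U) s x) hcont T _ (fun s x => by
      have a0 := G.sU.dx.ht s x
      have b0 := G.sφ.dx.ht s x
      have a1 := (hF (dx U s x + dx φ s x)).comp s (a0.add b0)
      have a2 := (hF (dx U s x)).comp s a0
      have a3 := ((hσ (dx U s x)).comp s a0).mul b0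
      refine ((a1.sub a2).sub a3).congr_deriv ?_
      simp only [Function.comp]; ring) iP hi hBi t ht
  have ii := time_integrable (fun s x =>
      (σ (dx U s x + dx φ s x) - σ (dx U s x)) * dt (dx φ) s x
      + (σ (dx U s x + dx φ s x) - σ (dx U s x) - s1 (dx U s x) * dx φ s x)
        * dt (dx U) s x) hcont T _ hi hBi t ht
  have iR := time_integrable (fun s x => (1 + dx φ s x ^ 2) ^ (p - 1) * dx (dx φ) s x ^ 2)
    ((wt_cont cv (p - 1)).mul (cv1.pow 2)) T B
    (fun s hs => wt_int (by linarith) (G.sl s hs).lv.1 (G.sl s hs).lv1)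
    (fun s hs => (wt_int_le (by linarith) (G.sl s hs).lv.1 (G.sl s hs).lv1).trans (G.bv1 s hs)) t ht
  have iQ := time_integrable (fun s x => (1 + dx φ s x ^ 2) ^ ((p - 1) / 2) * dx φ s x ^ 2)
    ((wt_cont cv ((p - 1) / 2)).mul (cv.pow 2)) T B
    (fun s hs => wt_int (by linarith) (G.sl s hs).lv.1 (G.sl s hs).lv)
    (fun s hs => (wt_int_le (by linarith) (G.sl s hs).lv.1 (G.sl s hs).lv).trans (G.bv s hs)) t ht
  obtain ⟨iω, hω⟩ := weight_int t ht.1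
  obtain ⟨iD, -, hD⟩ := G.est0' M hM h0 t ht
  have hmono := integral_mono_on ht.1 ii
    (((iR.const_mul (-(κ ^ 2 / 8))).add (iQ.const_mul A)).add (iω.const_mul K2)) (fun s hs => by
      have hs' : s ∈ Icc 0 T := ⟨hs.1, hs.2.trans ht.2⟩
      have H := G.sl s hs'
      obtain ⟨o1, -, o2, o3⟩ := omega_facts s hs'.1
      have d := H.diss κ p Np (CU * (1 + s)⁻¹) hκ hp hp1 hCU
        (fun x => by simpa using hκs s hs' x 1 ⟨zero_le_one, le_rfl⟩) (hN s hs')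
        (G.U1_le s hs') (G.g_le s hs')
      have e1 := (G.est0' M hM h0 s hs').2.1
      have e2 := G.bU2 s hs'
      have e3 := G.bg s hs'
      set ω := (1 + s) ^ (-(9:ℝ)/8)
      have f1 : (L2 * (CU * (1 + s)⁻¹)) ^ 2 * (∫ x, φ s x ^ 2) ≤ L2 ^ 2 * CU ^ 2 * Yb ^ 2 * ω := by
        calc _ ≤ (L2 * (CU * (1 + s)⁻¹)) ^ 2 * Yb ^ 2 := by gcongr
          _ = L2 ^ 2 * CU ^ 2 * Yb ^ 2 * ((1 + s)⁻¹) ^ 2 := by ring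
          _ ≤ _ := by gcongr
      have f2 : 2 * c2 ^ 2 * (∫ x, dx (dx U) s x ^ 2) ≤ 2 * c2 ^ 2 * CU ^ 2 * ω := by
        calc _ ≤ 2 * c2 ^ 2 * (CU * ω) ^ 2 := by gcongr
          _ = 2 * c2 ^ 2 * CU ^ 2 * ω ^ 2 := by ring
          _ ≤ _ := by gcongr
      have f3 : c2 * (∫ x, dt (dx U) s x ^ 2) ≤ c2 * CU ^ 2 * ω := by
        calc _ ≤ c2 * (CU * (1 + s)⁻¹) ^ 2 := by gcongr
          _ = c2 * CU ^ 2 * ((1 + s)⁻¹) ^ 2 := by ring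
          _ ≤ _ := by gcongr
      have e4 : K2 * ω = L2 ^ 2 * CU ^ 2 * Yb ^ 2 * ω + 2 * c2 ^ 2 * CU ^ 2 * ω
        + c2 * CU ^ 2 * ω := by rw [hK2]; ring
      linarith)
  rw [intervalIntegral.integral_add ((iR.const_mul _).add (iQ.const_mul _)) (iω.const_mul _),
    intervalIntegral.integral_add (iR.const_mul _) (iQ.const_mul _),
    intervalIntegral.integral_const_mul, intervalIntegral.integral_const_mul,
    intervalIntegral.integral_const_mul] at hmono
  have hQD := integral_mono_on ht.1 (iQ.const_mul κ) iD (fun s hs => by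
    have hs' : s ∈ Icc 0 T := ⟨hs.1, hs.2.trans ht.2⟩
    exact (G.sl s hs').coer κ p hp1 (hκs s hs'))
  rw [intervalIntegral.integral_const_mul] at hQD
  have hPt : κ / 2 * (∫ x, (1 + dx φ t x ^ 2) ^ ((p - 1) / 2) * dx φ t x ^ 2)
      ≤ ∫ x, (F (dx U t x + dx φ t x) - F (dx U t x) - σ (dx U t x) * dx φ t x) := by
    rw [← MeasureTheory.integral_const_mul]
    exact integral_mono ((wt_int (by linarith) (G.sl t ht).lv.1 (G.sl t ht).lv).const_mul _)
      (iP t ht) (Pl t ht)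
  have hP0 : ∫ x, (F (dx U 0 x + dx φ 0 x) - F (dx U 0 x) - σ (dx U 0 x) * dx φ 0 x)
      ≤ c2 / 2 * M ^ 2 := by
    calc _ ≤ ∫ x, c2 / 2 * dx φ 0 x ^ 2 :=
          integral_mono (iP 0 h0T) ((G.sl 0 h0T).lv.2.const_mul _) (Pu 0)
      _ = c2 / 2 * ∫ x, dx φ 0 x ^ 2 := MeasureTheory.integral_const_mul _ _
      _ ≤ _ := by gcongr
  set IR := ∫ s in (0:ℝ)..t, ∫ x, (1 + dx φ s x ^ 2) ^ (p - 1) * dx (dx φ) s x ^ 2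
  set IQ := ∫ s in (0:ℝ)..t, ∫ x, (1 + dx φ s x ^ 2) ^ ((p - 1) / 2) * dx φ s x ^ 2
  have q1 : IQ ≤ Yb ^ 2 / (2 * κ) := by
    rw [le_div_iff₀ (by positivity)]; linarith
  have hA0 : 0 ≤ A := by positivity
  have q2 : A * IQ ≤ A * (Yb ^ 2 / (2 * κ)) := mul_le_mul_of_nonneg_left q1 hA0
  have q3 : K2 * (∫ s in (0:ℝ)..t, (1 + s) ^ (-(9:ℝ)/8)) ≤ K2 * 8 :=
    mul_le_mul_of_nonneg_left hω (by positivity)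
  have q4 : c2 / 2 * M ^ 2 ≤ c2 / 2 * M ^ 2 * Np := le_mul_of_one_le_right (by positivity) hNp
  have q5 : K2 * 8 ≤ K2 * 8 * Np := le_mul_of_one_le_right (by positivity) hNp
  have q6 : A ≤ (L1 ^ 2 + 2 * c2 * (1 + CU)) * Np := by
    have : 2 * c2 * (1 + CU) ≤ 2 * c2 * (1 + CU) * Np := le_mul_of_one_le_right (by positivity) hNp
    rw [hA]; linarith
  have q7 : A * (Yb ^ 2 / (2 * κ)) ≤ (L1 ^ 2 + 2 * c2 * (1 + CU)) * Np * (Yb ^ 2 / (2 * κ)) :=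
    mul_le_mul_of_nonneg_right q6 (by positivity)
  linarith
end


/-! ### Verification of the structural hypotheses -/

lemma smooth_deriv {g : ℝ → ℝ} (hg : ContDiff ℝ (⊤ : ℕ∞) g) :
    (∀ z, HasDerivAt g (deriv g z) z) ∧ ContDiff ℝ (⊤ : ℕ∞) (deriv g) := by
  obtain ⟨h1, h2⟩ := contDiff_infty_iff_deriv.1 hg
  exact ⟨fun z => (h1 z).hasDerivAt, h2⟩

lemma L2norm_nonneg (g : ℝ → ℝ) : 0 ≤ L2norm g :=
  Real.rpow_nonneg (integral_nonneg fun x => sq_nonneg _) _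

lemma sq_of_L2norm_le {g : ℝ → ℝ} {A : ℝ} (h : L2norm g ≤ A) : ∫ x, g x ^ 2 ≤ A ^ 2 := by
  have h0 : 0 ≤ ∫ x, g x ^ 2 := integral_nonneg fun x => sq_nonneg _
  have e : (L2norm g) ^ 2 = ∫ x, g x ^ 2 := by
    unfold L2norm
    rw [← Real.sqrt_eq_rpow, Real.sq_sqrt h0]
  rw [← e]
  exact pow_le_pow_left₀ (L2norm_nonneg g) h 2

lemma kappa_le (c1 p CU a v θ : ℝ) (hc1 : 0 < c1) (hp1 : p < 1) (ha : 0 ≤ a) (haC : a ≤ CU)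
    (hθ : θ ∈ Icc (0:ℝ) 1) :
    c1 * (2 + 2 * CU ^ 2) ^ ((p - 1) / 2) * (1 + v ^ 2) ^ ((p - 1) / 2)
      ≤ c1 * (1 + (a + θ * v) ^ 2) ^ ((p - 1) / 2) := by
  rw [mul_assoc, ← Real.mul_rpow (by positivity) (by positivity)]
  refine mul_le_mul_of_nonneg_left ?_ hc1.le
  refine Real.rpow_le_rpow_of_nonpos (by positivity) ?_ (by linarith)
  have h1 : (a + θ * v) ^ 2 ≤ 2 * a ^ 2 + 2 * (θ * v) ^ 2 := by nlinarith [sq_nonneg (a - θ * v)]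
  have h2 : a ^ 2 ≤ CU ^ 2 := pow_le_pow_left₀ ha haC 2
  have h3 : (θ * v) ^ 2 ≤ v ^ 2 := by
    rw [mul_pow]
    have : θ ^ 2 ≤ 1 := by nlinarith [hθ.1, hθ.2]
    nlinarith [sq_nonneg v]
  nlinarith [mul_nonneg (sq_nonneg CU) (sq_nonneg v)]

lemma weight_N (p N v : ℝ) (hp1 : p < 1) (h : (1 + v ^ 2) ^ ((1:ℝ) / 2) ≤ N) :
    v ^ 2 ≤ N ^ (1 - p) * ((1 + v ^ 2) ^ ((p - 1) / 2) * v ^ 2) := by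
  have pos : 0 < 1 + v ^ 2 := by positivity
  have h1 : ((1 + v ^ 2) ^ ((1:ℝ) / 2)) ^ (1 - p) ≤ N ^ (1 - p) :=
    Real.rpow_le_rpow (Real.rpow_nonneg pos.le _) h (by linarith)
  rw [← Real.rpow_mul pos.le] at h1
  have h2 : (1 + v ^ 2) ^ ((1:ℝ) / 2 * (1 - p)) * (1 + v ^ 2) ^ ((p - 1) / 2) = 1 := by
    rw [← Real.rpow_add pos]
    have : (1:ℝ) / 2 * (1 - p) + (p - 1) / 2 = 0 := by ring
    rw [this, Real.rpow_zero]
  have h3 : 1 ≤ N ^ (1 - p) * (1 + v ^ 2) ^ ((p - 1) / 2) :=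
    h2.symm.le.trans (mul_le_mul_of_nonneg_right h1 (Real.rpow_nonneg pos.le _))
  nlinarith [sq_nonneg v]

lemma Sm.add {g k : ℝ → ℝ → ℝ} (hg : Sm g) (hk : Sm k) : Sm (fun t x => g t x + k t x) :=
  ContDiff.add hg hk

lemma Sm.neg {g : ℝ → ℝ → ℝ} (hg : Sm g) : Sm (fun t x => - g t x) :=
  ContDiff.neg hg

lemma Sm.dx_add {g k : ℝ → ℝ → ℝ} (hg : Sm g) (hk : Sm k) :
    _root_.dx (fun t x => g t x + k t x) = fun t x => _root_.dx g t x + _root_.dx k t x := by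
  funext t x; exact ((hg.hx t x).add (hk.hx t x)).deriv

lemma Sm.dt_add {g k : ℝ → ℝ → ℝ} (hg : Sm g) (hk : Sm k) :
    _root_.dt (fun t x => g t x + k t x) = fun t x => _root_.dt g t x + _root_.dt k t x := by
  funext t x; exact ((hg.ht t x).add (hk.ht t x)).deriv

lemma Sm.dx_neg {g : ℝ → ℝ → ℝ} (hg : Sm g) :
    _root_.dx (fun t x => - g t x) = fun t x => - _root_.dx g t x := by
  funext t x; exact ((hg.hx t x).neg).deriv

lemma Sm.dt_neg {g : ℝ → ℝ → ℝ} (hg : Sm g) :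
    _root_.dt (fun t x => - g t x) = fun t x => - _root_.dt g t x := by
  funext t x; exact ((hg.ht t x).neg).deriv

/-- square integrability of the derivatives of the rarefaction wave -/
lemma U_L2 (f1 f2 f3 : ℝ → ℝ) (hf1 : ∀ z, HasDerivAt f1 (f2 z) z)
    (hf2 : ∀ z, HasDerivAt f2 (f3 z) z) (cf3 : Continuous f3)
    (hf2pos : ∀ z, 0 < f2 z)
    (U : ℝ → ℝ → ℝ) (hU : Sm U) (um up CU : ℝ) (hCU : 0 < CU)
    (hpde : ∀ t, 0 ≤ t → ∀ x, dt U t x + f1 (U t x) * dx U t x = 0)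
    (hbd : ∀ t, 0 ≤ t → ∀ x, U t x ∈ Icc um up)
    (hpos : ∀ t, 0 ≤ t → ∀ x, 0 < dx U t x) (hle : ∀ t, 0 ≤ t → ∀ x, dx U t x ≤ CU)
    (hxx : ∀ t, 0 ≤ t → ∀ x, |dx (dx U) t x| ≤ CU * (1 + t) ^ (-(9:ℝ)/8))
    (t : ℝ) (ht : 0 ≤ t) : CL2 (dx (dx U) t) ∧ CL2 (dt (dx U) t) := by
  obtain ⟨C, hC⟩ := char_dom f1 f2 f3 hf1 hf2 cf3 hf2pos U hU um up CU hCU hpde hbd hpos hle hxx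
  have cU1 := hU.dx.cont_x t
  have iU1 : Integrable (dx U t) := integrable_deriv_of_bdd (U t) (dx U t) (hU.hx t) cU1
    (fun x => (hpos t ht x).le) um up (hbd t ht)
  have l1 : CL2 (dx U t) := by
    refine ⟨cU1, (iU1.const_mul CU).mono' (cU1.pow 2).aestronglyMeasurable
      (Eventually.of_forall fun x => ?_)⟩
    rw [Real.norm_eq_abs, abs_of_nonneg (sq_nonneg _), sq]
    exact mul_le_mul_of_nonneg_right (hle t ht x) (hpos t ht x).le
  have l2 : CL2 (dx (dx U) t) := l1.dom (hU.dx.dx.cont_x t) C (fun x => by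
    rw [abs_of_pos (hpos t ht x)]; exact hC t ht x)
  refine ⟨l2, ?_⟩
  obtain ⟨K1, hK1, b1⟩ := compact_bound f1 (cont_of_deriv hf1) um up
  obtain ⟨K2, hK2, b2⟩ := compact_bound f2 (cont_of_deriv hf2) um up
  have e : ∀ x, dt (dx U) t x = -(f2 (U t x) * dx U t x * dx U t x + f1 (U t x) * dx (dx U) t x) := by
    intro x
    rw [← hU.comm]
    have e1 : dt U t = fun x => -(f1 (U t x) * dx U t x) := by
      funext y; linarith [hpde t ht y]
    have h := (((hf1 (U t x)).comp x (hU.hx t x)).mul (hU.dx.hx t x)).neg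
    have h' : HasDerivAt (dt U t)
        (-(f2 (U t x) * dx U t x * dx U t x + f1 (U t x) * dx (dx U) t x)) x := by rw [e1]; exact h
    exact h'.deriv
  refine l1.dom (hU.dx.dt.cont_x t) (K2 * CU + K1 * C) fun x => ?_
  have p1 := hpos t ht x
  rw [e, abs_neg, abs_of_pos p1]
  refine (abs_add_le _ _).trans ?_
  rw [abs_mul, abs_mul, abs_mul, abs_of_pos p1, add_mul]
  have q1 := b1 _ (hbd t ht x)
  have q2 := b2 _ (hbd t ht x)
  have q3 := hC t ht x
  have q4 := hle t ht x
  refine add_le_add ?_ ?_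
  · gcongr
  · rw [mul_assoc]
    exact mul_le_mul q1 q3 (abs_nonneg _) hK1

/-- range of the solution by the maximum principle -/
lemma range_u (s1 f1 : ℝ → ℝ) (c2 : ℝ) (cf1 : Continuous f1) (s0 : ∀ z, 0 ≤ s1 z)
    (sc : ∀ z, s1 z ≤ c2) (U φ : ℝ → ℝ → ℝ) (hU : Sm U) (hφ : Sm φ) (um up M T B : ℝ)
    (hbd : ∀ t, 0 ≤ t → ∀ x, U t x ∈ Icc um up)
    (hpde : ∀ t, 0 ≤ t → ∀ x, dt U t x + f1 (U t x) * dx U t x = 0)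
    (heq : ∀ t ∈ Icc 0 T, ∀ x, dt φ t x =
      -(f1 (U t x + φ t x) * (dx U t x + dx φ t x) - f1 (U t x) * dx U t x)
      + s1 (dx U t x + dx φ t x) * (dx (dx U) t x + dx (dx φ) t x))
    (hB : ∀ t ∈ Icc 0 T, ∀ x, |φ t x| ≤ B) (h0 : ∀ x, |φ 0 x| ≤ M) :
    ∀ t ∈ Icc 0 T, ∀ x, U t x + φ t x ∈ Icc (um - M) (up + M) := by
  obtain ⟨L, hL, bL⟩ := compact_bound f1 cf1 (um - B) (up + B)
  have hc2 : 0 ≤ c2 := (s0 0).trans (sc 0)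
  have hr : ∀ t ∈ Icc 0 T, ∀ x, U t x + φ t x ∈ Icc (um - B) (up + B) := fun t ht x => by
    have := hbd t ht.1 x
    have := abs_le.1 (hB t ht x)
    constructor <;> linarith [(hbd t ht.1 x).1, (hbd t ht.1 x).2]
  have hW : Sm (fun t x => U t x + φ t x) := hU.add hφ
  have ex : dx (fun t x => U t x + φ t x) = fun t x => dx U t x + dx φ t x := hU.dx_add hφ
  have exx : dx (dx (fun t x => U t x + φ t x)) = fun t x => dx (dx U) t x + dx (dx φ) t x := by
    rw [ex]; exact hU.dx.dx_add hφ.dx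
  have et : dt (fun t x => U t x + φ t x) = fun t x => dt U t x + dt φ t x := hU.dt_add hφ
  have key : ∀ t ∈ Icc 0 T, ∀ x, dt U t x + dt φ t x
      = s1 (dx U t x + dx φ t x) * (dx (dx U) t x + dx (dx φ) t x)
        + (- f1 (U t x + φ t x)) * (dx U t x + dx φ t x) := fun t ht x => by
    rw [heq t ht x]; linarith [hpde t ht.1 x]
  have ha : ∀ t ∈ Icc 0 T, ∀ x, 0 ≤ s1 (dx U t x + dx φ t x) ∧
      s1 (dx U t x + dx φ t x) ≤ c2 + L := fun t _ x => ⟨s0 _, by linarith [sc (dx U t x + dx φ t x)]⟩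
  have hb : ∀ t ∈ Icc 0 T, ∀ x, |(- f1 (U t x + φ t x))| ≤ c2 + L := fun t ht x => by
    rw [abs_neg]; linarith [bL _ (hr t ht x)]
  have up1 := max_principle (fun t x => U t x + φ t x) hW T (up + B) (up + M) (c2 + L)
    (fun t x => s1 (dx U t x + dx φ t x)) (fun t x => - f1 (U t x + φ t x))
    (fun t ht x => (hr t ht x).2) ha hb
    (fun t ht x => by rw [exx, ex, et]; exact (key t ht x).le)
    (fun x => by linarith [(hbd 0 le_rfl x).2, (abs_le.1 (h0 x)).2])
  have lo1 := max_principle (fun t x => - (U t x + φ t x)) hW.neg T (-(um - B)) (-(um - M)) (c2 + L)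
    (fun t x => s1 (dx U t x + dx φ t x)) (fun t x => - f1 (U t x + φ t x))
    (fun t ht x => neg_le_neg (hr t ht x).1) ha hb
    (fun t ht x => by
      rw [hW.dx_neg, hW.dt_neg, hW.dx.dx_neg, exx, ex, et]
      have := key t ht x
      simp only
      linarith)
    (fun x => by linarith [(hbd 0 le_rfl x).1, (abs_le.1 (h0 x)).1])
  intro t ht x
  exact ⟨by linarith [lo1 t ht x], up1 t ht x⟩


/-- Proposition 5.1 (first-derivative energy estimate): with `N` any bound for the
weighted `L^∞` norm `sup (1+(∂ₓφ)²)^(1/2)` on `[0,T]×ℝ`, if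
`‖φ(0)‖_{L²} + ‖∂ₓφ(0)‖_{L²} + sup|φ(0)| ≤ M` then for all `t ∈ [0,T]`,
`∫ (1+(∂ₓφ(t))²)^((p-1)/2) (∂ₓφ(t))² + ∫₀^t ∫ (1+(∂ₓφ)²)^(p-1) (∂ₓ²φ)² ≤ C₀ N^(1-p)`,
with `C₀` depending only on `p, c₁, c₂, CU, um, up, f, M`. -/
theorem first_derivative_energy_estimate
    (p c₁ c₂ : ℝ) (hp0 : 0 < p) (hp1 : p < 1) (hc1 : 0 < c₁) (hc12 : c₁ ≤ c₂)
    (f : ℝ → ℝ) (hf : ContDiff ℝ (⊤ : ℕ∞) f) (hconv : ∀ u : ℝ, 0 < deriv (deriv f) u)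
    (um up CU : ℝ) (hu : um < up) (hCU : 0 < CU)
    (M : ℝ) (hM : 0 < M) :
    ∃ C₀ : ℝ, 0 < C₀ ∧
      ∀ σ : ℝ → ℝ, ContDiff ℝ (⊤ : ℕ∞) σ → σ 0 = 0 →
      (∀ v : ℝ, c₁ * (1 + v ^ 2) ^ ((p - 1) / 2) ≤ deriv σ v ∧
        deriv σ v ≤ c₂ * (1 + v ^ 2) ^ ((p - 1) / 2)) →
      ∀ U : ℝ → ℝ → ℝ, ContDiff ℝ (⊤ : ℕ∞) (fun q : ℝ × ℝ => U q.1 q.2) →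
      (∀ t : ℝ, 0 ≤ t → ∀ x : ℝ,
        deriv (fun s => U s x) t + deriv (fun y => f (U t y)) x = 0) →
      (∀ t : ℝ, 0 ≤ t → ∀ x : ℝ, um < U t x ∧ U t x < up) →
      (∀ t : ℝ, 0 ≤ t → ∀ x : ℝ, 0 < deriv (U t) x) →
      (∀ t : ℝ, 0 ≤ t → ∀ x : ℝ, deriv (U t) x ≤ CU * (1 + t)⁻¹) →
      (∀ t : ℝ, 0 ≤ t → L2norm (deriv (U t)) ≤ CU * (1 + t) ^ (-(1 : ℝ) / 2)) →
      (∀ t : ℝ, 0 ≤ t → (∫ x : ℝ, |deriv (deriv (U t)) x|) ≤ CU * (1 + t)⁻¹) →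
      (∀ t : ℝ, 0 ≤ t → ∀ x : ℝ,
        L2norm (deriv (deriv (U t))) + |deriv (deriv (U t)) x|
          ≤ CU * (1 + t) ^ (-(9 : ℝ) / 8)) →
      (∀ t : ℝ, 0 ≤ t →
        L2norm (deriv (deriv (deriv (U t)))) ≤ CU * (1 + t) ^ (-(9 : ℝ) / 8)) →
      (∀ t : ℝ, 0 ≤ t → ∀ x : ℝ,
        L2norm (fun y => deriv (fun s => deriv (U s) y) t)
          + |deriv (fun s => deriv (U s) x) t| ≤ CU * (1 + t)⁻¹) →
      ∀ T : ℝ, 0 < T →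
      ∀ φ : ℝ → ℝ → ℝ, ContDiff ℝ (⊤ : ℕ∞) (fun q : ℝ × ℝ => φ q.1 q.2) →
      (∀ t ∈ Icc (0 : ℝ) T, ∀ x : ℝ,
        deriv (fun s => φ s x) t
          + deriv (fun y => f (U t y + φ t y) - f (U t y)) x
          - deriv (fun y => σ (deriv (U t) y + deriv (φ t) y) - σ (deriv (U t) y)) x
        = deriv (fun y => σ (deriv (U t) y)) x) →
      (∃ B : ℝ, ∀ t ∈ Icc (0 : ℝ) T, ∀ x : ℝ,
        |φ t x| + |deriv (φ t) x| + |deriv (deriv (φ t)) x|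
          + |deriv (deriv (deriv (φ t))) x| + |deriv (fun s => deriv (φ s) x) t| ≤ B) →
      (∀ t ∈ Icc (0 : ℝ) T,
        Integrable (fun x : ℝ => (φ t x) ^ 2) ∧
        Integrable (fun x : ℝ => (deriv (φ t) x) ^ 2) ∧
        Integrable (fun x : ℝ => (deriv (deriv (φ t)) x) ^ 2) ∧
        Integrable (fun x : ℝ => (deriv (deriv (deriv (φ t))) x) ^ 2) ∧
        Integrable (fun x : ℝ => (deriv (fun s => deriv (φ s) x) t) ^ 2)) →
      (∃ B : ℝ, ∀ t ∈ Icc (0 : ℝ) T,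
        (∫ x : ℝ, (φ t x) ^ 2) + (∫ x : ℝ, (deriv (φ t) x) ^ 2)
          + (∫ x : ℝ, (deriv (deriv (φ t)) x) ^ 2)
          + (∫ x : ℝ, (deriv (deriv (deriv (φ t))) x) ^ 2)
          + (∫ x : ℝ, (deriv (fun s => deriv (φ s) x) t) ^ 2) ≤ B) →
      (∀ t ∈ Icc (0 : ℝ) T,
        Tendsto (φ t) atTop (nhds 0) ∧ Tendsto (φ t) atBot (nhds 0) ∧
        Tendsto (deriv (φ t)) atTop (nhds 0) ∧ Tendsto (deriv (φ t)) atBot (nhds 0) ∧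
        Tendsto (deriv (deriv (φ t))) atTop (nhds 0) ∧
        Tendsto (deriv (deriv (φ t))) atBot (nhds 0)) →
      L2norm (φ 0) + L2norm (deriv (φ 0)) + (⨆ x : ℝ, |φ 0 x|) ≤ M →
      ∀ N : ℝ,
      (∀ t ∈ Icc (0 : ℝ) T, ∀ x : ℝ, (1 + (deriv (φ t) x) ^ 2) ^ ((1 : ℝ) / 2) ≤ N) →
      ∀ t ∈ Icc (0 : ℝ) T,
        (∫ x : ℝ, (1 + (deriv (φ t) x) ^ 2) ^ ((p - 1) / 2) * (deriv (φ t) x) ^ 2)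
          + (∫ τ in (0:ℝ)..t, ∫ x : ℝ,
              (1 + (deriv (φ τ) x) ^ 2) ^ (p - 1) * (deriv (deriv (φ τ)) x) ^ 2)
        ≤ C₀ * N ^ (1 - p) := by
  obtain ⟨hf', sf1⟩ := smooth_deriv hf
  obtain ⟨hf1', sf2⟩ := smooth_deriv sf1
  obtain ⟨hf2', sf3⟩ := smooth_deriv sf2
  obtain ⟨L1, hL1, bL1⟩ := compact_bound (deriv f) sf1.continuous (um - M) (up + M)
  obtain ⟨L2, hL2, bL2⟩ := compact_bound (deriv (deriv f)) sf2.continuous (um - M) (up + M)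
  have hc2 : 0 < c₂ := hc1.trans_le hc12
  set κ := c₁ * (2 + 2 * CU ^ 2) ^ ((p - 1) / 2) with hκdef
  have hκ : 0 < κ := mul_pos hc1 (Real.rpow_pos_of_pos (by positivity) _)
  set C1 := c₂ / 2 * M ^ 2 + (L1 ^ 2 + 2 * c₂ * (1 + CU)) * ((M + 16 * c₂ * CU) ^ 2 / (2 * κ))
      + 8 * (L2 ^ 2 * CU ^ 2 * (M + 16 * c₂ * CU) ^ 2 + 2 * c₂ ^ 2 * CU ^ 2 + c₂ * CU ^ 2) with hC1
  have hC1pos : 0 < C1 := by positivity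
  refine ⟨(2 / κ + 8 / κ ^ 2) * C1, by positivity, ?_⟩
  intro σ hσ _ hσ' U hU hpdeU hUbd hUpos hUle _ _ hU2 _ hUg T hT φ hφ heq hBex hintg hBint _ hM0 N hN
    t ht
  have sU : Sm U := hU
  have sφ : Sm φ := hφ
  obtain ⟨dσ, sσ1⟩ := smooth_deriv hσ
  have h0T : (0:ℝ) ∈ Icc 0 T := ⟨le_rfl, hT.le⟩
  have s0 : ∀ z, 0 ≤ deriv σ z := fun z =>
    le_trans (mul_nonneg hc1.le (Real.rpow_nonneg (by positivity) _)) (hσ' z).1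
  have sc : ∀ z, deriv σ z ≤ c₂ := fun z => by
    have := (wt_le (r := (p - 1) / 2) (by linarith) z).2
    nlinarith [(hσ' z).2]
  have pde : ∀ t, 0 ≤ t → ∀ x, dt U t x + deriv f (U t x) * dx U t x = 0 := fun t ht x => by
    have h := hpdeU t ht x
    have e : deriv (fun y => f (U t y)) x = deriv f (U t x) * dx U t x :=
      ((hf' (U t x)).comp x (sU.hx t x)).deriv
    rw [e] at h
    exact h
  have hbd : ∀ t, 0 ≤ t → ∀ x, U t x ∈ Icc um up := fun t ht x =>
    ⟨(hUbd t ht x).1.le, (hUbd t ht x).2.le⟩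
  have hpos : ∀ t, 0 ≤ t → ∀ x, 0 < dx U t x := hUpos
  have inv_le : ∀ t : ℝ, 0 ≤ t → CU * (1 + t)⁻¹ ≤ CU := fun t ht => by
    have : (1 + t)⁻¹ ≤ 1 := inv_le_one_of_one_le₀ (by linarith)
    nlinarith
  have hle : ∀ t, 0 ≤ t → ∀ x, dx U t x ≤ CU := fun t ht x => (hUle t ht x).trans (inv_le t ht)
  have hxx : ∀ t, 0 ≤ t → ∀ x, |dx (dx U) t x| ≤ CU * (1 + t) ^ (-(9:ℝ)/8) := fun t ht x => by
    have h := hU2 t ht x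
    have h' := L2norm_nonneg (deriv (deriv (U t)))
    have e : |dx (dx U) t x| = |deriv (deriv (U t)) x| := rfl
    linarith
  have hUL := U_L2 (deriv f) (deriv (deriv f)) (deriv (deriv (deriv f))) hf1' hf2' sf3.continuous
    hconv U sU um up CU hCU pde hbd hpos hle hxx
  have heq' : ∀ t ∈ Icc 0 T, ∀ x, dt φ t x =
      -(deriv f (U t x + φ t x) * (dx U t x + dx φ t x) - deriv f (U t x) * dx U t x)
      + deriv σ (dx U t x + dx φ t x) * (dx (dx U) t x + dx (dx φ) t x) := fun t ht x => by
    have h := heq t ht x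
    have e1 : deriv (fun y => f (U t y + φ t y) - f (U t y)) x
        = deriv f (U t x + φ t x) * (dx U t x + dx φ t x) - deriv f (U t x) * dx U t x :=
      (((hf' (U t x + φ t x)).comp x ((sU.hx t x).add (sφ.hx t x))).sub
        ((hf' (U t x)).comp x (sU.hx t x))).deriv
    have e2 : deriv (fun y => σ (deriv (U t) y + deriv (φ t) y) - σ (deriv (U t) y)) x
        = deriv σ (dx U t x + dx φ t x) * (dx (dx U) t x + dx (dx φ) t x)
          - deriv σ (dx U t x) * dx (dx U) t x :=
      (((dσ (dx U t x + dx φ t x)).comp x ((sU.dx.hx t x).add (sφ.dx.hx t x))).sub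
        ((dσ (dx U t x)).comp x (sU.dx.hx t x))).deriv
    have e3 : deriv (fun y => σ (deriv (U t) y)) x = deriv σ (dx U t x) * dx (dx U) t x :=
      ((dσ (dx U t x)).comp x (sU.dx.hx t x)).deriv
    have e4 : dt φ t x = deriv (fun s => φ s x) t := rfl
    rw [e1, e2, e3, ← e4] at h
    linarith
  obtain ⟨B, hB⟩ := hBex
  have hB1 : ∀ t ∈ Icc 0 T, ∀ x, |φ t x| ≤ B := fun t ht x => by
    have := hB t ht x
    linarith [abs_nonneg (deriv (φ t) x), abs_nonneg (deriv (deriv (φ t)) x),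
      abs_nonneg (deriv (deriv (deriv (φ t))) x), abs_nonneg (deriv (fun s => deriv (φ s) x) t)]
  have hsup : ∀ x, |φ 0 x| ≤ ⨆ x : ℝ, |φ 0 x| := fun x =>
    le_ciSup (f := fun x => |φ 0 x|) ⟨B, by rintro _ ⟨y, rfl⟩; exact hB1 0 h0T y⟩ x
  have n1 := L2norm_nonneg (φ 0)
  have n2 := L2norm_nonneg (deriv (φ 0))
  have n3 : 0 ≤ ⨆ x : ℝ, |φ 0 x| := (abs_nonneg _).trans (hsup 0)
  have hφ0 : ∀ x, |φ 0 x| ≤ M := fun x => by linarith [hsup x]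
  have hr := range_u (deriv σ) (deriv f) c₂ sf1.continuous s0 sc U φ sU sφ um up M T B hbd pde heq'
    hB1 hφ0
  have hrU : ∀ t, 0 ≤ t → ∀ x, U t x ∈ Icc (um - M) (up + M) := fun t ht x =>
    ⟨by linarith [(hbd t ht x).1], by linarith [(hbd t ht x).2]⟩
  obtain ⟨B2, hB2⟩ := hBint
  have nn : ∀ g : ℝ → ℝ, 0 ≤ ∫ x, g x ^ 2 := fun g => integral_nonneg fun x => sq_nonneg _
  have hB2' : ∀ t ∈ Icc 0 T, (∫ x, φ t x ^ 2) ≤ B2 ∧ (∫ x, dx φ t x ^ 2) ≤ B2 ∧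
      (∫ x, dx (dx φ) t x ^ 2) ≤ B2 ∧ (∫ x, dt (dx φ) t x ^ 2) ≤ B2 := fun t ht => by
    have h : (∫ x, φ t x ^ 2) + (∫ x, dx φ t x ^ 2) + (∫ x, dx (dx φ) t x ^ 2)
      + (∫ x, dx (dx (dx φ)) t x ^ 2) + (∫ x, dt (dx φ) t x ^ 2) ≤ B2 := hB2 t ht
    have a1 := nn (φ t)
    have a2 := nn (dx φ t)
    have a3 := nn (dx (dx φ) t)
    have a4 := nn (dx (dx (dx φ)) t)
    have a5 := nn (dt (dx φ) t)
    refine ⟨?_, ?_, ?_, ?_⟩ <;> linarith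
  have G : Gl σ (deriv σ) f (deriv f) (deriv (deriv f)) c₂ L1 L2 CU T B2 U φ :=
    { sl := fun t ht =>
        { hσ := dσ
          cs1 := sσ1.continuous
          s1_nonneg := s0
          s1_le := sc
          hf := hf'
          hf1 := hf1'
          cf2 := sf2.continuous
          f2_nonneg := fun z => (hconv z).le
          hU := sU.hx t
          hU1 := sU.dx.hx t
          hφ := sφ.hx t
          hv := sφ.dx.hx t
          hh := fun x => by rw [← sφ.comm]; exact sφ.dt.hx t x
          U1_nonneg := fun x => (hpos t ht.1 x).le
          U1_le := hle t ht.1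
          f1_bd := fun x θ hθ => bL1 _ (seg_mem (hrU t ht.1 x) (hr t ht x) hθ)
          f2_bd := fun x θ hθ => bL2 _ (seg_mem (hrU t ht.1 x) (hr t ht x) hθ)
          lU2 := (hUL t ht.1).1
          lg := (hUL t ht.1).2
          lφ := ⟨sφ.cont_x t, (hintg t ht).1⟩
          lv := ⟨sφ.dx.cont_x t, (hintg t ht).2.1⟩
          lv1 := ⟨sφ.dx.dx.cont_x t, (hintg t ht).2.2.1⟩
          lh1 := ⟨sφ.dx.dt.cont_x t, (hintg t ht).2.2.2.2⟩
          heq := heq' t ht }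
      sU := sU
      sφ := sφ
      hCU := hCU
      hT := hT.le
      bφ := fun t ht => (hB2' t ht).1
      bv := fun t ht => (hB2' t ht).2.1
      bv1 := fun t ht => (hB2' t ht).2.2.1
      bh1 := fun t ht => (hB2' t ht).2.2.2
      bU2 := fun t ht => by
        have h := hU2 t ht.1 0
        have h' := abs_nonneg (deriv (deriv (U t)) 0)
        exact sq_of_L2norm_le (g := deriv (deriv (U t))) (by linarith)
      bg := fun t ht => by
        have h := hUg t ht.1 0
        have h' := abs_nonneg (deriv (fun s => deriv (U s) 0) t)
        exact sq_of_L2norm_le (g := fun y => deriv (fun s => deriv (U s) y) t) (by linarith)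
      U1_le := fun t ht x => hUle t ht.1 x
      g_le := fun t ht x => by
        have h := hUg t ht.1 x
        have h' := L2norm_nonneg (fun y => deriv (fun s => deriv (U s) y) t)
        have h2 := inv_le t ht.1
        have e : |dt (dx U) t x| = |deriv (fun s => deriv (U s) x) t| := rfl
        linarith }
  have hN1 : 1 ≤ N := by
    refine le_trans ?_ (hN 0 h0T 0)
    exact Real.one_le_rpow (by nlinarith [sq_nonneg (deriv (φ 0) 0)]) (by norm_num)
  have hNp : 1 ≤ N ^ (1 - p) := Real.one_le_rpow hN1 (by linarith)
  have est := G.est1 M κ p (N ^ (1 - p)) hM.le hκ hp0 hp1 hNp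
    (sq_of_L2norm_le (g := φ 0) (by linarith)) (sq_of_L2norm_le (g := deriv (φ 0)) (by linarith))
    (fun t ht x θ hθ => (kappa_le c₁ p CU (dx U t x) (dx φ t x) θ hc1 hp1 (hpos t ht.1 x).le
      (hle t ht.1 x) hθ).trans (hσ' _).1)
    (fun t ht x => weight_N p N (dx φ t x) hp1 (hN t ht x)) t ht
  rw [← hC1] at est
  have p1 : 0 ≤ ∫ x, (1 + dx φ t x ^ 2) ^ ((p - 1) / 2) * dx φ t x ^ 2 :=
    integral_nonneg fun x => mul_nonneg (Real.rpow_nonneg (by positivity) _) (sq_nonneg _)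
  have p2 : 0 ≤ ∫ s in (0:ℝ)..t, ∫ x, (1 + dx φ s x ^ 2) ^ (p - 1) * dx (dx φ) s x ^ 2 :=
    intervalIntegral.integral_nonneg ht.1 fun s _ =>
      integral_nonneg fun x => mul_nonneg (Real.rpow_nonneg (by positivity) _) (sq_nonneg _)
  change (∫ x, (1 + dx φ t x ^ 2) ^ ((p - 1) / 2) * dx φ t x ^ 2)
    + (∫ s in (0:ℝ)..t, ∫ x, (1 + dx φ s x ^ 2) ^ (p - 1) * dx (dx φ) s x ^ 2) ≤ _
  set IQ := ∫ x, (1 + dx φ t x ^ 2) ^ ((p - 1) / 2) * dx φ t x ^ 2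
  set IR := ∫ s in (0:ℝ)..t, ∫ x, (1 + dx φ s x ^ 2) ^ (p - 1) * dx (dx φ) s x ^ 2
  have z1 : IQ ≤ 2 / κ * (C1 * N ^ (1 - p)) := by
    have : κ / 2 * IQ ≤ C1 * N ^ (1 - p) := by
      have : 0 ≤ κ ^ 2 / 8 * IR := by positivity
      linarith
    calc IQ = 2 / κ * (κ / 2 * IQ) := by field_simp
      _ ≤ _ := by gcongr
  have z2 : IR ≤ 8 / κ ^ 2 * (C1 * N ^ (1 - p)) := by
    have : κ ^ 2 / 8 * IR ≤ C1 * N ^ (1 - p) := by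
      have : 0 ≤ κ / 2 * IQ := by positivity
      linarith
    calc IR = 8 / κ ^ 2 * (κ ^ 2 / 8 * IR) := by field_simp
      _ ≤ _ := by gcongr
  linarith
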